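/- Let Ω = (0,1)×(−1,1) and let u ∈ A ∩ SBV_∞(Ω;ℝ²) be given by u(x) = R(x₂)x + ψ(x₂) a.e. with R(t) = R⁺ for t ∈ [0,1), R(t) = R⁻ for t ∈ (−1,0), ψ(t) = ψ⁺ for t ∈ [0,1), ψ(t) = ψ⁻ for t ∈ (−1,0), where R± ∈ SO(2) and ψ± ∈ ℝ². Then there exists a sequence (u_ε)_ε ⊂ W^{1,1}(Ω;ℝ²) with ∫_Ω u_ε dx = ∫_Ω u dx and u_ε ∈ A_ε for all ε, such that u_ε converges weakly* to u in BV(Ω;ℝ²). -/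

import Mathlib

open MeasureTheory Set Filter Topology
open scoped ENNReal

noncomputable section

/-- We identify `ℝ²` with maps `Fin 2 → ℝ`; `x 0` is the `x₁` coordinate and
`x 1` the `x₂` coordinate. -/
abbrev V2 := Fin 2 → ℝ

/-- `2 × 2` real matrices. -/
abbrev Mat2 := Matrix (Fin 2) (Fin 2) ℝ

/-- Proper rotations: `SO(2) = {R : R Rᵀ = 1, det R = 1}`. -/
def SO2 : Set Mat2 := {R | R * R.transpose = 1 ∧ R.det = 1}

def e1 : V2 := ![1, 0]
def e2 : V2 := ![0, 1]

/-- Euclidean norm on `ℝ²`. -/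
def vnorm (v : V2) : ℝ := Real.sqrt (v 0 ^ 2 + v 1 ^ 2)

/-- Frobenius norm on `2 × 2` matrices. -/
def mnorm (M : Mat2) : ℝ := Real.sqrt (∑ i, ∑ j, M i j ^ 2)

/-- Euclidean inner product on `ℝ²`. -/
def dot (v w : V2) : ℝ := ∑ i, v i * w i

/-- Tensor (outer) product `a ⊗ b = a bᵀ` of two vectors. -/
def outer (a b : V2) : Mat2 := Matrix.of fun i j => a i * b j

/-- Identification of `ℝ²` with the Euclidean space `EuclideanSpace ℝ (Fin 2)`. -/
def vToE (v : V2) : EuclideanSpace ℝ (Fin 2) := (EuclideanSpace.equiv (Fin 2) ℝ).symm v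

/-- Identification of `2×2` matrices with `EuclideanSpace ℝ (Fin 2 × Fin 2)`
(so that the induced norm is the Frobenius norm). -/
def mToE (M : Mat2) : EuclideanSpace ℝ (Fin 2 × Fin 2) :=
  (EuclideanSpace.equiv (Fin 2 × Fin 2) ℝ).symm fun p => M p.1 p.2

/-- A vector-valued function of one real variable has bounded variation on `s`
(with respect to the Euclidean norm). -/
def BVv (ψ : ℝ → V2) (s : Set ℝ) : Prop := BoundedVariationOn (fun t => vToE (ψ t)) s

/-- A matrix-valued function of one real variable has bounded variation on `s`
(with respect to the Frobenius norm). -/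
def BVm (R : ℝ → Mat2) (s : Set ℝ) : Prop := BoundedVariationOn (fun t => mToE (R t)) s

/-- Componentwise (a.e. pointwise) derivative of a vector-valued function of one variable.
For a one-dimensional `BV` function, the classical derivative exists a.e. and coincides with
the density of the absolutely continuous part of its distributional derivative
(the approximate derivative). -/
def vecDeriv (ψ : ℝ → V2) (t : ℝ) : V2 := fun i => deriv (fun s => ψ s i) t

/-- Componentwise derivative of a matrix-valued function of one variable. -/
def mDeriv (R : ℝ → Mat2) (t : ℝ) : Mat2 := Matrix.of fun i j => deriv (fun s => R s i j) t

/-- The rigid layers `ε Y_rig = {x : Int.fract (x₂/ε) ∈ [λ, 1)}` (1-periodic extension of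
`[0,1) × [λ,1)`, scaled by `ε`). -/
def rigid2 (lam ε : ℝ) : Set V2 := {x | lam ≤ Int.fract (x 1 / ε)}

/-- The one-dimensional rigid layers `ε I_rig`, where `I_rig` is the 1-periodic extension
of `[λ, 1)`. -/
def rigid1 (lam ε : ℝ) : Set ℝ := {t | lam ≤ Int.fract (t / ε)}

/-- `a_Ω = inf_{x ∈ Ω} x₂`. -/
def aOm (Ω : Set V2) : ℝ := sInf ((fun x : V2 => x 1) '' Ω)

/-- `b_Ω = sup_{x ∈ Ω} x₂`. -/
def bOm (Ω : Set V2) : ℝ := sSup ((fun x : V2 => x 1) '' Ω)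

/-- `Ω` is `x₁`-connected: every horizontal slice is a (possibly empty) interval. -/
def X1Connected (Ω : Set V2) : Prop := ∀ t : ℝ, OrdConnected {s : ℝ | ![s, t] ∈ Ω}

/-- A (nonempty) bounded Lipschitz domain: near every boundary point, after a rotation,
`Ω` is the region above the graph of a Lipschitz function. -/
def IsLipschitzDomain (Ω : Set V2) : Prop :=
  IsOpen Ω ∧ Ω.Nonempty ∧ Bornology.IsBounded Ω ∧
    ∀ x ∈ frontier Ω, ∃ Q ∈ SO2, ∃ L : NNReal, ∃ f : ℝ → ℝ, ∃ r : ℝ, 0 < r ∧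
      LipschitzWith L f ∧ ∀ y ∈ Metric.ball x r, (y ∈ Ω ↔ f (Q.mulVec y 0) < Q.mulVec y 1)

/-- Partial derivative `∂_j φ` of a scalar test function. -/
def pd (j : Fin 2) (φ : V2 → ℝ) (x : V2) : ℝ := fderiv ℝ φ x (Pi.single j 1)

/-- Componentwise integrability of a matrix-valued map. -/
def IntegrableOnM (g : V2 → Mat2) (Ω : Set V2) : Prop :=
  ∀ i j, IntegrableOn (fun x => g x i j) Ω volume

/-- `u ∈ W^{1,1}(Ω;ℝ²)` with weak gradient `gu`, expressed through integration by parts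
against smooth compactly supported test functions. -/
structure IsSobolev11On (Ω : Set V2) (u : V2 → V2) (gu : V2 → Mat2) : Prop where
  int_u : IntegrableOn u Ω volume
  int_gu : IntegrableOnM gu Ω
  ibp : ∀ φ : V2 → ℝ, ContDiff ℝ (⊤ : ℕ∞) φ → HasCompactSupport φ → tsupport φ ⊆ Ω →
    ∀ i j, ∫ x in Ω, u x i * pd j φ x = - ∫ x in Ω, φ x * gu x i j

/-- `u ∈ BV(Ω;ℝ²)`, with distributional derivative `Du = gu · L² + gs · σ`.
Here `gu` is the approximate differential (density of the absolutely continuous part),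
`σ = |D^s u|` is the total variation measure of the singular part (a finite measure,
concentrated on `Ω` and singular with respect to Lebesgue measure), and `gs` is the
polar density of the singular part, of unit Frobenius norm `σ`-a.e. -/
structure HasBVDerivOn (Ω : Set V2) (u : V2 → V2) (gu : V2 → Mat2)
    (σ : Measure V2) (gs : V2 → Mat2) : Prop where
  int_u : IntegrableOn u Ω volume
  int_gu : IntegrableOnM gu Ω
  fin : σ Set.univ ≠ ⊤
  conc : σ Ωᶜ = 0
  perp : σ ⟂ₘ (volume : Measure V2)
  meas_gs : ∀ i j, AEMeasurable (fun x => gs x i j) σ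
  unit : ∀ᵐ x ∂σ, mnorm (gs x) = 1
  ibp : ∀ φ : V2 → ℝ, ContDiff ℝ (⊤ : ℕ∞) φ → HasCompactSupport φ → tsupport φ ⊆ Ω →
    ∀ i j, ∫ x in Ω, u x i * pd j φ x
        = (- ∫ x in Ω, φ x * gu x i j) - ∫ x, φ x * gs x i j ∂σ

/-- `L¹(Ω;ℝ²)` convergence of a sequence. -/
def L1ConvOn (Ω : Set V2) (un : ℕ → V2 → V2) (u : V2 → V2) : Prop :=
  Tendsto (fun n => ∫ x in Ω, vnorm (un n x - u x)) atTop (𝓝 0)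

/-- Weak* convergence of the measures `gn n · L²∟Ω` to `gu · L²∟Ω + gs · σ`
in `M(Ω; ℝ^{2×2})`, tested against continuous functions compactly supported in `Ω`. -/
def MeasConv (Ω : Set V2) (gn : ℕ → V2 → Mat2) (gu : V2 → Mat2)
    (σ : Measure V2) (gs : V2 → Mat2) : Prop :=
  ∀ φ : V2 → ℝ, Continuous φ → HasCompactSupport φ → tsupport φ ⊆ Ω → ∀ i j,
    Tendsto (fun n => ∫ x in Ω, φ x * gn n x i j) atTop
      (𝓝 ((∫ x in Ω, φ x * gu x i j) + ∫ x, φ x * gs x i j ∂σ))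

/-- Weak* convergence in `BV(Ω;ℝ²)` of a sequence of `W^{1,1}` maps to a `BV` limit:
`L¹` convergence together with weak* convergence of the derivative measures. -/
def WeakStarToBV (Ω : Set V2) (un : ℕ → V2 → V2) (u : V2 → V2) : Prop :=
  ∃ gu σ gs, HasBVDerivOn Ω u gu σ gs ∧ L1ConvOn Ω un u ∧
    ∀ gn : ℕ → V2 → Mat2, (∀ n, IsSobolev11On Ω (un n) (gn n)) → MeasConv Ω gn gu σ gs

/-- `u ∈ A_ε`, witnessed by the data `R ∈ L^∞(Ω;SO(2))` and `γ ∈ L¹(Ω)`: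
`u ∈ W^{1,1}(Ω;ℝ²)` with `∇u = R (I + γ e₁⊗e₂)` a.e. and `γ = 0` a.e. on `εY_rig ∩ Ω`. -/
structure MemAeps (Ω : Set V2) (lam ε : ℝ) (u : V2 → V2)
    (R : V2 → Mat2) (γ : V2 → ℝ) : Prop where
  so2 : ∀ᵐ x ∂(volume.restrict Ω), R x ∈ SO2
  int_γ : IntegrableOn γ Ω volume
  sob : IsSobolev11On Ω u fun x => R x * (1 + γ x • outer e1 e2)
  rig : ∀ᵐ x ∂(volume.restrict (Ω ∩ rigid2 lam ε)), γ x = 0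

/-- The elastoplastic energy `E_ε(u) = ∫_Ω |γ| dx` for `u ∈ A_ε`, `∞` otherwise,
as an `ℝ≥0∞`-valued functional (the decomposition data is essentially unique). -/
def Eeps (Ω : Set V2) (lam ε : ℝ) (u : V2 → V2) : ℝ≥0∞ :=
  sInf {c | ∃ R γ, MemAeps Ω lam ε u R γ ∧ c = ∫⁻ x in Ω, ENNReal.ofReal |γ x|}

/-- `u ∈ A` relative to the vertical interval `(a, b)`:
`u ∈ BV(Ω;ℝ²)` with `u(x) = R(x₂)x + ψ(x₂)` a.e., `R ∈ BV(a,b;SO(2))`,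
`ψ ∈ BV(a,b;ℝ²)` and `det ∇u = 1` a.e. in `Ω`. -/
def memAOn (Ω : Set V2) (a b : ℝ) (u : V2 → V2) : Prop :=
  ∃ gu σ gs, HasBVDerivOn Ω u gu σ gs ∧
    (∃ R : ℝ → Mat2, ∃ ψ : ℝ → V2, (∀ t ∈ Ioo a b, R t ∈ SO2) ∧
      BVm R (Ioo a b) ∧ BVv ψ (Ioo a b) ∧
      ∀ᵐ x ∂(volume.restrict Ω), u x = (R (x 1)).mulVec x + ψ (x 1)) ∧
    ∀ᵐ x ∂(volume.restrict Ω), (gu x).det = 1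

/-- `u ∈ A`. -/
def memA (Ω : Set V2) (u : V2 → V2) : Prop := memAOn Ω (aOm Ω) (bOm Ω) u

/-- `u ∈ A∥` relative to the vertical interval `(a,b)`:
`u(x) = Rx + ϑ(x₂) R e₁ + c` a.e. with a constant rotation `R ∈ SO(2)`,
`ϑ ∈ BV(a,b)` and `c ∈ ℝ²`. -/
def memAparOn (Ω : Set V2) (a b : ℝ) (u : V2 → V2) : Prop :=
  ∃ R ∈ SO2, ∃ ϑ : ℝ → ℝ, ∃ c : V2, BoundedVariationOn ϑ (Ioo a b) ∧
    ∀ᵐ x ∂(volume.restrict Ω), u x = R.mulVec x + ϑ (x 1) • R.mulVec e1 + c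

/-- `u ∈ A∥`. -/
def memApar (Ω : Set V2) (u : V2 → V2) : Prop := memAparOn Ω (aOm Ω) (bOm Ω) u

/-- The limit energy `E(u) = ∫_Ω |ψ'·Re₁| dx + |D^s u|(Ω)` for `u ∈ A`, `∞` otherwise. -/
def Efun (Ω : Set V2) (u : V2 → V2) : ℝ≥0∞ :=
  sInf {c | ∃ gu σ gs, HasBVDerivOn Ω u gu σ gs ∧
    ∃ R : ℝ → Mat2, ∃ ψ : ℝ → V2,
      (∀ t ∈ Ioo (aOm Ω) (bOm Ω), R t ∈ SO2) ∧ BVm R (Ioo (aOm Ω) (bOm Ω)) ∧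
      BVv ψ (Ioo (aOm Ω) (bOm Ω)) ∧
      (∀ᵐ x ∂(volume.restrict Ω), u x = (R (x 1)).mulVec x + ψ (x 1)) ∧
      (∀ᵐ x ∂(volume.restrict Ω), (gu x).det = 1) ∧
      c = (∫⁻ x in Ω, ENNReal.ofReal |dot (vecDeriv ψ (x 1)) ((R (x 1)).mulVec e1)|)
          + σ Set.univ}

/-- The limit energy on `A∥`: `E(u) = ∫_Ω |ϑ'(x₂)| dx + |D^s u|(Ω)` for `u ∈ A∥`,
`∞` otherwise. -/
def EparFun (Ω : Set V2) (u : V2 → V2) : ℝ≥0∞ :=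
  sInf {c | ∃ gu σ gs, HasBVDerivOn Ω u gu σ gs ∧
    ∃ R ∈ SO2, ∃ ϑ : ℝ → ℝ, ∃ c0 : V2, BoundedVariationOn ϑ (Ioo (aOm Ω) (bOm Ω)) ∧
      (∀ᵐ x ∂(volume.restrict Ω), u x = R.mulVec x + ϑ (x 1) • R.mulVec e1 + c0) ∧
      c = (∫⁻ x in Ω, ENNReal.ofReal |deriv ϑ (x 1)|) + σ Set.univ}

/-- The regularized limit energy `E^δ(u) = ∫_Ω |ϑ'| dx + |D^s u|(Ω) + δ|Ω|` on `A∥`,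
`∞` otherwise. -/
def EDelta (Ω : Set V2) (δ : ℝ) (u : V2 → V2) : ℝ≥0∞ :=
  EparFun Ω u + ENNReal.ofReal δ * volume Ω

/-- `‖v‖_{W^{1,p}(Ω;ℝ²)}^p = ∫_Ω |v|^p + ∫_Ω |Dv|^p` for a map `v` with weak Jacobian `G`. -/
def Wp1 (p : ℝ) (Ω : Set V2) (v : V2 → V2) (G : V2 → Mat2) : ℝ≥0∞ :=
  (∫⁻ x in Ω, ENNReal.ofReal (vnorm (v x) ^ p)) + ∫⁻ x in Ω, ENNReal.ofReal (mnorm (G x) ^ p)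

/-- The regularized energy
`E^δ_ε(u) = ∫_Ω |γ| dx + δ ‖∂₁ u‖_{W^{1,p}(Ω;ℝ²)}^p` for `u ∈ A_ε` with
`∂₁u = R e₁ ∈ W^{1,p}(Ω;ℝ²)`, and `∞` otherwise. -/
def EepsDelta (Ω : Set V2) (lam ε δ p : ℝ) (u : V2 → V2) : ℝ≥0∞ :=
  sInf {c | ∃ R γ, MemAeps Ω lam ε u R γ ∧
    ∃ G : V2 → Mat2, IsSobolev11On Ω (fun x => (R x).mulVec e1) G ∧
      c = (∫⁻ x in Ω, ENNReal.ofReal |γ x|) +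
          ENNReal.ofReal δ * Wp1 p Ω (fun x => (R x).mulVec e1) G}

/-- `x` is an approximate jump point of `u`, with one-sided approximate limits `a ≠ b`
relative to a unit normal `ν`. -/
def JumpPt (u : V2 → V2) (x : V2) : Prop :=
  ∃ a b ν : V2, a ≠ b ∧ vnorm ν = 1 ∧
    Tendsto (fun r : ℝ =>
        (∫⁻ z in {z | z ∈ Metric.ball x r ∧ 0 < dot (z - x) ν},
            ENNReal.ofReal (vnorm (u z - a))) / volume (Metric.ball x r))
      (𝓝[>] 0) (𝓝 0) ∧
    Tendsto (fun r : ℝ =>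
        (∫⁻ z in {z | z ∈ Metric.ball x r ∧ dot (z - x) ν < 0},
            ENNReal.ofReal (vnorm (u z - b))) / volume (Metric.ball x r))
      (𝓝[>] 0) (𝓝 0)

/-- The jump set `J_u` of `u` in `Ω`. -/
def jumpSet (Ω : Set V2) (u : V2 → V2) : Set V2 := {x ∈ Ω | JumpPt u x}

/-- `u ∈ SBV_∞(Ω;ℝ²)`: `u ∈ BV` with singular part concentrated on the jump set
(no Cantor part), `∇u ∈ L^∞(Ω;ℝ^{2×2})` and `H¹(J_u) < ∞`. -/
def memSBVinf (Ω : Set V2) (u : V2 → V2) : Prop :=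
  ∃ gu σ gs, HasBVDerivOn Ω u gu σ gs ∧
    σ {x | ¬ JumpPt u x} = 0 ∧
    (∃ M : ℝ, ∀ᵐ x ∂(volume.restrict Ω), mnorm (gu x) ≤ M) ∧
    Measure.hausdorffMeasure (1 : ℝ) (jumpSet Ω u) ≠ ⊤

/-- Piecewise constant functions on `(a,b)` with finitely many jumps
(the class `PC(a,b)`). -/
def PCOn {α : Type*} (a b : ℝ) (f : ℝ → α) : Prop :=
  ∃ S : Finset ℝ, ∀ s₁ ∈ Ioo a b, ∀ s₂ ∈ Ioo a b, s₁ ≤ s₂ →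
    (∀ r ∈ S, r ∉ Icc s₁ s₂) → f s₁ = f s₂

/-- Piecewise Lipschitz functions on `(a,b)` with finitely many jump points:
the class `SBV_∞(a,b;ℝ²)` of one-dimensional special functions of bounded variation
with bounded derivative and finitely many jumps. -/
def PLipOn (a b : ℝ) (f : ℝ → V2) : Prop :=
  ∃ S : Finset ℝ, ∃ L : ℝ, 0 ≤ L ∧ ∀ s₁ ∈ Ioo a b, ∀ s₂ ∈ Ioo a b, s₁ ≤ s₂ →
    (∀ r ∈ S, r ∉ Icc s₁ s₂) → vnorm (f s₂ - f s₁) ≤ L * (s₂ - s₁)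

/-- The rectangle `Ω = (0,1) × (−1,1)`. -/
def Rect : Set V2 := {x | x 0 ∈ Ioo (0:ℝ) 1 ∧ x 1 ∈ Ioo (-1:ℝ) 1}

/-- `f ∈ W^{1,1}(a,b)`: `f` has an integrable weak derivative on `(a,b)`
(absolutely continuous representative). -/
def IsW11On (f : ℝ → ℝ) (a b : ℝ) : Prop :=
  ∃ g : ℝ → ℝ, IntegrableOn g (Ioo a b) volume ∧
    ∀ s ∈ Ioo a b, ∀ t ∈ Ioo a b, f t - f s = ∫ r in s..t, g r


lemma isOpen_Rect : IsOpen Rect := by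
  have h0 : Continuous fun x : V2 => x 0 := continuous_apply 0
  have h1 : Continuous fun x : V2 => x 1 := continuous_apply 1
  exact (isOpen_Ioo.preimage h0).inter (isOpen_Ioo.preimage h1)

lemma Rect_eq : Rect = Set.pi Set.univ (fun i : Fin 2 => Ioo ((![0, -1] : V2) i) ((![1, 1] : V2) i)) := by
  ext x
  simp [Rect, Fin.forall_fin_two]

lemma volume_Rect : volume Rect = 2 := by
  rw [Rect_eq, Real.volume_pi_Ioo]
  simp
  norm_num

instance : IsFiniteMeasure (volume.restrict Rect) :=
  ⟨by rw [Measure.restrict_apply_univ, volume_Rect]; norm_num⟩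

lemma smooth_approx (U : Set V2) (hU : IsOpen U) (φ : V2 → ℝ) (hφ : Continuous φ)
    (hc : HasCompactSupport φ) (hs : tsupport φ ⊆ U) (δ : ℝ) (hδ : 0 < δ) :
    ∃ g : V2 → ℝ, ContDiff ℝ (⊤ : ℕ∞) g ∧ HasCompactSupport g ∧ tsupport g ⊆ U ∧
      ∀ a, |g a - φ a| ≤ δ := by
  have huc := hc.uniformContinuous_of_continuous hφ 
  rcases Metric.uniformContinuous_iff.mp huc δ hδ with ⟨r, hr, hfr⟩
  obtain ⟨r', hr', hsub⟩ := hc.isCompact.exists_cthickening_subset_open hU hs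
  obtain ⟨g, hg, hga⟩ := hφ.exists_contDiff_dist_le_of_forall_mem_ball_dist_le (lt_min hr hr')
  have hsupp : tsupport g ⊆ Metric.cthickening r' (tsupport φ) := by
    apply closure_minimal _ Metric.isClosed_cthickening
    intro a ha
    by_contra hcon
    apply ha
    have key : ∀ x ∈ Metric.ball a (min r r'), φ x = 0 := by
      intro x hx
      by_contra hx0
      apply hcon
      apply Metric.mem_cthickening_of_dist_le a x r' _ (subset_closure hx0)
      rw [Metric.mem_ball, lt_min_iff] at hx
      rw [dist_comm]; exact hx.2.le
    have ha0 : φ a = 0 := key a (Metric.mem_ball_self (lt_min hr hr'))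
    have := hga a 0 (fun x hx => by rw [key x hx, ha0, dist_self])
    have := dist_le_zero.1 this
    rw [this, ha0]
  refine ⟨g, hg, ?_, hsupp.trans hsub, ?_⟩
  · exact HasCompactSupport.of_support_subset_isCompact hc.isCompact.cthickening
      (subset_closure.trans hsupp)
  · intro a
    have := hga a δ (fun x hx => (hfr (lt_of_lt_of_le (Metric.mem_ball.1 hx) (min_le_left _ _))).le)
    rwa [Real.dist_eq] at this

lemma ae_bdd_mul_int {φ f : V2 → ℝ} {μ : Measure V2} (hφ : Continuous φ) (hc : HasCompactSupport φ)
    (hf : Integrable f μ) : Integrable (fun x => φ x * f x) μ := by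
  obtain ⟨C, hC⟩ := hc.exists_bound_of_continuous hφ
  exact hf.bdd_mul hφ.aestronglyMeasurable (Eventually.of_forall hC)

lemma weak_unique {u : V2 → V2} {g g' : V2 → Mat2} (h : IsSobolev11On Rect u g)
    (h' : IsSobolev11On Rect u g') (i j : Fin 2) :
    ∀ᵐ x ∂(volume.restrict Rect), g x i j = g' x i j := by
  have := isOpen_Rect.ae_eq_zero_of_integral_contDiff_smul_eq_zero (μ := volume)
    (f := fun x => g x i j - g' x i j)
    (((h.int_gu i j).sub (h'.int_gu i j)).locallyIntegrableOn) (by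
      intro φ hφ hc hs
      have h1 := h.ibp φ hφ hc hs i j
      have h2 := h'.ibp φ hφ hc hs i j
      rw [h1, neg_inj] at h2
      rw [← setIntegral_eq_integral_of_forall_compl_eq_zero (s := Rect)]
      · simp only [smul_eq_mul, mul_sub]
        rw [integral_sub (ae_bdd_mul_int hφ.continuous hc (h.int_gu i j))
          (ae_bdd_mul_int hφ.continuous hc (h'.int_gu i j)), h2, sub_self]
      · intro x hx
        rw [image_eq_zero_of_notMem_tsupport (fun hh => hx (hs hh)), zero_smul])
  rw [ae_restrict_iff' isOpen_Rect.measurableSet]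
  filter_upwards [this] with x hx hxR
  exact sub_eq_zero.1 (hx hxR)

lemma pd_continuous {φ : V2 → ℝ} (hφ : ContDiff ℝ (⊤ : ℕ∞) φ) (j : Fin 2) : Continuous (pd j φ) := by
  have := hφ.continuous_fderiv (by simp)
  unfold pd
  fun_prop

lemma pd_compact {φ : V2 → ℝ} (hc : HasCompactSupport φ) (j : Fin 2) :
    HasCompactSupport (pd j φ) :=
  hc.fderiv_apply ℝ _

lemma gs_int {u : V2 → V2} {gu σ gs} (h : HasBVDerivOn Rect u gu σ gs) (i j : Fin 2) :
    Integrable (fun x => gs x i j) σ := by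
  have : IsFiniteMeasure σ := ⟨lt_top_iff_ne_top.2 h.fin⟩
  refine Integrable.of_bound (h.meas_gs i j).aestronglyMeasurable 1 ?_
  filter_upwards [h.unit] with x hx
  have h1 : ∑ i, ∑ j, gs x i j ^ 2 = 1 := by
    unfold mnorm at hx
    rwa [Real.sqrt_eq_one] at hx
  rw [Real.norm_eq_abs, abs_le_one_iff_mul_self_le_one]
  simp only [Fin.sum_univ_two] at h1
  fin_cases i <;> fin_cases j <;> simp <;> nlinarith [sq_nonneg (gs x 0 0), sq_nonneg (gs x 0 1), sq_nonneg (gs x 1 0), sq_nonneg (gs x 1 1)]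

lemma weakStar_of {un : ℕ → V2 → V2} {u : V2 → V2} {G : ℕ → V2 → Mat2} {gu σ gs}
    (hBV : HasBVDerivOn Rect u gu σ gs)
    (hS : ∀ n, IsSobolev11On Rect (un n) (G n))
    (M : ℝ) (hM : ∀ n i j, ∫ x in Rect, |G n x i j| ≤ M)
    (C : ℝ) (hC : ∀ n i, ∀ᵐ x ∂(volume.restrict Rect), |un n x i| ≤ C)
    (hlim : ∀ i, ∀ᵐ x ∂(volume.restrict Rect), Tendsto (fun n => un n x i) atTop (𝓝 (u x i))) :
    WeakStarToBV Rect un u := by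
  have hui : ∀ n i, Integrable (fun x => un n x i) (volume.restrict Rect) := fun n i =>
    (hS n).int_u.eval i
  have hu : ∀ i, Integrable (fun x => u x i) (volume.restrict Rect) := fun i =>
    hBV.int_u.eval i
  have hM0 : 0 ≤ M := le_trans (by positivity) (hM 0 0 0)
  have hC' : ∀ i, ∀ᵐ x ∂(volume.restrict Rect), |u x i| ≤ C := by
    intro i
    have h2 : ∀ᵐ x ∂(volume.restrict Rect), ∀ n, |un n x i| ≤ C := ae_all_iff.2 (fun n => hC n i)
    filter_upwards [hlim i, h2] with x h1 h2
    exact le_of_tendsto h1.abs (Eventually.of_forall h2)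
  refine ⟨gu, σ, gs, hBV, ?_, ?_⟩
  · have key : ∀ i, Tendsto (fun n => ∫ x in Rect, |un n x i - u x i|) atTop (𝓝 0) := by
      intro i
      have := tendsto_integral_of_dominated_convergence (μ := volume.restrict Rect)
        (F := fun n x => |un n x i - u x i|) (f := fun _ => 0) (fun _ => C + C)
        (fun n => ((hui n i).sub (hu i)).abs.aestronglyMeasurable)
        (integrable_const _) ?_ ?_
      · simpa using this
      · intro n
        filter_upwards [hC n i, hC' i] with x h1 h2
        rw [Real.norm_eq_abs, abs_abs]
        exact (abs_sub _ _).trans (add_le_add h1 h2)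
      · filter_upwards [hlim i] with x hx
        have := (hx.sub_const (u x i)).abs
        simpa using this
    have key2 := (key 0).add (key 1)
    rw [add_zero] at key2
    refine squeeze_zero (fun n => integral_nonneg (fun x => Real.sqrt_nonneg _)) (fun n => ?_) key2
    have i0 : Integrable (fun x => |un n x 0 - u x 0|) (volume.restrict Rect) :=
      ((hui n 0).sub (hu 0)).abs
    have i1 : Integrable (fun x => |un n x 1 - u x 1|) (volume.restrict Rect) :=
      ((hui n 1).sub (hu 1)).abs
    rw [← integral_add i0 i1]
    apply integral_mono_of_nonneg (Eventually.of_forall (fun x => Real.sqrt_nonneg _)) (i0.add i1)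
    refine Eventually.of_forall (fun x => ?_)
    change Real.sqrt ((un n x 0 - u x 0) ^ 2 + (un n x 1 - u x 1) ^ 2)
      ≤ |un n x 0 - u x 0| + |un n x 1 - u x 1|
    rw [Real.sqrt_le_left (by positivity)]
    nlinarith [sq_abs (un n x 0 - u x 0), sq_abs (un n x 1 - u x 1),
      mul_nonneg (abs_nonneg (un n x 0 - u x 0)) (abs_nonneg (un n x 1 - u x 1))]
  · intro gn hgn φ hφ hc hs i j
    have e1 : ∀ n, ∫ x in Rect, φ x * gn n x i j = ∫ x in Rect, φ x * G n x i j := by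
      intro n
      apply integral_congr_ae
      filter_upwards [weak_unique (hgn n) (hS n) i j] with x hx
      rw [hx]
    simp only [e1]
    -- smooth case
    have smooth : ∀ ψ : V2 → ℝ, ContDiff ℝ (⊤ : ℕ∞) ψ → HasCompactSupport ψ → tsupport ψ ⊆ Rect →
        Tendsto (fun n => ∫ x in Rect, ψ x * G n x i j) atTop
          (𝓝 ((∫ x in Rect, ψ x * gu x i j) + ∫ x, ψ x * gs x i j ∂σ)) := by
      intro ψ h1 h2 h3
      have a1 : ∀ n, ∫ x in Rect, ψ x * G n x i j = - ∫ x in Rect, un n x i * pd j ψ x := by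
        intro n; rw [(hS n).ibp ψ h1 h2 h3 i j, neg_neg]
      have a2 : (∫ x in Rect, ψ x * gu x i j) + ∫ x, ψ x * gs x i j ∂σ
          = - ∫ x in Rect, u x i * pd j ψ x := by
        rw [hBV.ibp ψ h1 h2 h3 i j]; ring
      simp only [a1, a2]
      apply Tendsto.neg
      obtain ⟨D, hD⟩ := (pd_compact h2 j).exists_bound_of_continuous (pd_continuous h1 j)
      apply tendsto_integral_of_dominated_convergence (fun _ => C * D)
      · intro n
        exact (hui n i).aestronglyMeasurable.mul (pd_continuous h1 j).aestronglyMeasurable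
      · exact integrable_const _
      · intro n
        filter_upwards [hC n i] with x hx
        rw [norm_mul]
        exact mul_le_mul hx (hD x) (norm_nonneg _) (le_trans (abs_nonneg _) hx)
      · filter_upwards [hlim i] with x hx
        exact hx.mul_const _
    have hGi : ∀ n, Integrable (fun x => G n x i j) (volume.restrict Rect) := fun n => (hS n).int_gu i j
    have hgui : Integrable (fun x => gu x i j) (volume.restrict Rect) := hBV.int_gu i j
    have hgsi := gs_int hBV i j
    set K := M + (∫ x in Rect, |gu x i j|) + (∫ x, |gs x i j| ∂σ) + 1 with hK
    have hI1 : 0 ≤ ∫ x in Rect, |gu x i j| := integral_nonneg (fun x => abs_nonneg _)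
    have hI2 : 0 ≤ ∫ x, |gs x i j| ∂σ := integral_nonneg (fun x => abs_nonneg _)
    have hK0 : 0 < K := by positivity
    have diff : ∀ (μ : Measure V2) (f : V2 → ℝ) (ψ : V2 → ℝ) (δ : ℝ), 0 ≤ δ → Integrable f μ → Continuous ψ →
        HasCompactSupport ψ → (∀ a, |ψ a - φ a| ≤ δ) →
        |(∫ x, ψ x * f x ∂μ) - ∫ x, φ x * f x ∂μ| ≤ δ * ∫ x, |f x| ∂μ := by
      intro μ f ψ δ hδ hf h1 h2 h3
      rw [← integral_sub (ae_bdd_mul_int h1 h2 hf) (ae_bdd_mul_int hφ hc hf), ← integral_const_mul]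
      refine (abs_integral_le_integral_abs).trans ?_
      apply integral_mono_of_nonneg (Eventually.of_forall (fun x => abs_nonneg _)) (hf.abs.const_mul _)
      refine Eventually.of_forall (fun x => ?_)
      simp only
      rw [← sub_mul, abs_mul]
      exact mul_le_mul_of_nonneg_right (h3 x) (abs_nonneg _)
    rw [Metric.tendsto_atTop]
    intro e he
    obtain ⟨ψ, h1, h2, h3, h4⟩ := smooth_approx Rect isOpen_Rect φ hφ hc hs (e / (2 * K)) (by positivity)
    obtain ⟨N, hN⟩ := Metric.tendsto_atTop.1 (smooth ψ h1 h2 h3) (e / 2) (by positivity)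
    refine ⟨N, fun n hn => ?_⟩
    have b0 := hN n hn
    have hδ0 : 0 ≤ e / (2 * K) := by positivity
    have b1 := diff _ _ ψ _ hδ0 (hGi n) h1.continuous h2 h4
    have b2 := diff _ _ ψ _ hδ0 hgui h1.continuous h2 h4
    have b3 := diff _ _ ψ _ hδ0 hgsi h1.continuous h2 h4
    have b4 : e / (2 * K) * (∫ x in Rect, |G n x i j|) ≤ e / (2 * K) * M :=
      mul_le_mul_of_nonneg_left (hM n i j) hδ0
    have b5 : e / (2 * K) * M + e / (2 * K) * (∫ x in Rect, |gu x i j|)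
        + e / (2 * K) * (∫ x, |gs x i j| ∂σ) < e / 2 := by
      have : e / (2 * K) * K = e / 2 := by field_simp
      have h0 : 0 < e / (2 * K) := by positivity
      rw [hK] at this
      rw [← this]
      rw [← hK]
      nlinarith
    rw [Real.dist_eq] at b0 ⊢
    rw [abs_lt] at b0 ⊢
    rw [abs_le] at b1 b2 b3
    constructor <;> linarith [b1.1, b1.2, b2.1, b2.2, b3.1, b3.2, b0.1, b0.2]

lemma fubini2 (F : V2 → ℝ) (hF : Integrable F) :
    ∫ x, F x = ∫ s : ℝ, ∫ t : ℝ, F ![s, t] := by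
  have h := (volume_preserving_finTwoArrow ℝ).symm
  rw [← h.integral_comp' F, Measure.volume_eq_prod, integral_prod]
  · rfl
  · rw [← Measure.volume_eq_prod]
    exact (h.integrable_comp_emb (MeasurableEquiv.measurableEmbedding _)).2 hF

lemma fubini2' (F : V2 → ℝ) (hF : Integrable F) :
    ∫ x, F x = ∫ t : ℝ, ∫ s : ℝ, F ![s, t] := by
  have h := (volume_preserving_finTwoArrow ℝ).symm
  rw [← h.integral_comp' F, Measure.volume_eq_prod, integral_prod_symm]
  · rfl
  · rw [← Measure.volume_eq_prod]
    exact (h.integrable_comp_emb (MeasurableEquiv.measurableEmbedding _)).2 hF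

lemma meas_half : MeasurableSet {x : V2 | 0 ≤ x 1} :=
  measurableSet_le measurable_const (measurable_pi_apply 1)

lemma pd_cont1 {g : V2 → ℝ} (hg : ContDiff ℝ 1 g) (j : Fin 2) : Continuous (pd j g) := by
  have := hg.continuous_fderiv (by simp)
  unfold pd
  fun_prop

lemma pd_int {g : V2 → ℝ} (hg : ContDiff ℝ 1 g) (hc : HasCompactSupport g) (j : Fin 2) :
    Integrable (pd j g) := (pd_cont1 hg j).integrable_of_hasCompactSupport (pd_compact hc j)

lemma slice1 {g : V2 → ℝ} (hg : ContDiff ℝ 1 g) (s : ℝ) (t : ℝ) :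
    HasDerivAt (fun t => g ![s, t]) (pd 1 g ![s, t]) t := by
  have h1 : HasFDerivAt g (fderiv ℝ g ![s, t]) ![s, t] :=
    (hg.differentiable (by simp) _).hasFDerivAt
  have h2 : HasDerivAt (fun t : ℝ => (![s, t] : V2)) (Pi.single 1 1) t := by
    rw [hasDerivAt_pi]
    intro i
    fin_cases i
    · simpa using hasDerivAt_const t s
    · exact hasDerivAt_id t
  exact h1.comp_hasDerivAt t h2

lemma slice0 {g : V2 → ℝ} (hg : ContDiff ℝ 1 g) (s : ℝ) (t : ℝ) :
    HasDerivAt (fun s => g ![s, t]) (pd 0 g ![s, t]) s := by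
  have h1 : HasFDerivAt g (fderiv ℝ g ![s, t]) ![s, t] :=
    (hg.differentiable (by simp) _).hasFDerivAt
  have h2 : HasDerivAt (fun s : ℝ => (![s, t] : V2)) (Pi.single 0 1) s := by
    rw [hasDerivAt_pi]
    intro i
    fin_cases i
    · exact hasDerivAt_id s
    · simpa using hasDerivAt_const s t
  exact h1.comp_hasDerivAt s h2

lemma sl_contDiff1 (s : ℝ) : ContDiff ℝ 1 (fun t : ℝ => (![s, t] : V2)) := by
  rw [contDiff_pi]
  intro i
  fin_cases i
  · exact contDiff_const
  · exact contDiff_id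

lemma sl_contDiff0 (t : ℝ) : ContDiff ℝ 1 (fun s : ℝ => (![s, t] : V2)) := by
  rw [contDiff_pi]
  intro i
  fin_cases i
  · exact contDiff_id
  · exact contDiff_const

lemma sl_cs1 {g : V2 → ℝ} (hc : HasCompactSupport g) (s : ℝ) :
    HasCompactSupport (fun t : ℝ => g ![s, t]) := by
  apply HasCompactSupport.of_support_subset_isCompact (hc.isCompact.image (continuous_apply (1 : Fin 2)))
  intro t ht
  exact ⟨![s, t], subset_closure ht, rfl⟩

lemma sl_cs0 {g : V2 → ℝ} (hc : HasCompactSupport g) (t : ℝ) :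
    HasCompactSupport (fun s : ℝ => g ![s, t]) := by
  apply HasCompactSupport.of_support_subset_isCompact (hc.isCompact.image (continuous_apply (0 : Fin 2)))
  intro s ht
  exact ⟨![s, t], subset_closure ht, rfl⟩

lemma int_line0 {g : V2 → ℝ} (hg : ContDiff ℝ 1 g) (hc : HasCompactSupport g) (t : ℝ) :
    ∫ s, pd 0 g ![s, t] = 0 := by
  have h := integral_eq_zero_of_hasDerivAt_of_integrable (f := fun s => g ![s, t])
    (f' := fun s => pd 0 g ![s, t]) (fun s => slice0 hg s t) ?_ ?_
  · exact h
  · exact ((pd_cont1 hg 0).comp (sl_contDiff0 t).continuous).integrable_of_hasCompactSupport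
      (sl_cs0 (pd_compact hc 0) t)
  · exact (hg.continuous.comp (sl_contDiff0 t).continuous).integrable_of_hasCompactSupport
      (sl_cs0 hc t)

lemma int_line1 {g : V2 → ℝ} (hg : ContDiff ℝ 1 g) (hc : HasCompactSupport g) (s : ℝ) :
    ∫ t, pd 1 g ![s, t] = 0 := by
  have h := integral_eq_zero_of_hasDerivAt_of_integrable (f := fun t => g ![s, t])
    (f' := fun t => pd 1 g ![s, t]) (fun t => slice1 hg s t) ?_ ?_
  · exact h
  · exact ((pd_cont1 hg 1).comp (sl_contDiff1 s).continuous).integrable_of_hasCompactSupport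
      (sl_cs1 (pd_compact hc 1) s)
  · exact (hg.continuous.comp (sl_contDiff1 s).continuous).integrable_of_hasCompactSupport
      (sl_cs1 hc s)

lemma int_half1 {g : V2 → ℝ} (hg : ContDiff ℝ 1 g) (hc : HasCompactSupport g) (s : ℝ) :
    ∫ t in Ici (0:ℝ), pd 1 g ![s, t] = - g ![s, 0] := by
  have h := HasCompactSupport.integral_Ioi_deriv_eq (f := fun t => g ![s, t])
    (hg.comp (sl_contDiff1 s)) (sl_cs1 hc s) 0
  rw [integral_Ici_eq_integral_Ioi, ← h]
  congr 1
  ext t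
  exact (slice1 hg s t).deriv.symm

lemma int_total {g : V2 → ℝ} (hg : ContDiff ℝ 1 g) (hc : HasCompactSupport g) (j : Fin 2) :
    ∫ x, pd j g x = 0 := by
  fin_cases j
  · change ∫ x, pd 0 g x = 0
    rw [fubini2' _ (pd_int hg hc 0)]
    simp only [int_line0 hg hc, integral_zero]
  · change ∫ x, pd 1 g x = 0
    rw [fubini2 _ (pd_int hg hc 1)]
    simp only [int_line1 hg hc, integral_zero]

lemma int_H0 {g : V2 → ℝ} (hg : ContDiff ℝ 1 g) (hc : HasCompactSupport g) :
    ∫ x in {x : V2 | 0 ≤ x 1}, pd 0 g x = 0 := by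
  rw [← integral_indicator meas_half, fubini2' _ ((pd_int hg hc 0).indicator meas_half)]
  have : ∀ t : ℝ, ∫ s : ℝ, ({x : V2 | 0 ≤ x 1}.indicator (fun x => pd 0 g x)) ![s, t] = 0 := by
    intro t
    by_cases ht : 0 ≤ t
    · simp only [indicator, mem_ofPred_eq, Matrix.cons_val_one, Matrix.cons_val_zero, ht, if_true]
      exact int_line0 hg hc t
    · simp [indicator, ht]
  simp only [this, integral_zero]

lemma int_H1 {g : V2 → ℝ} (hg : ContDiff ℝ 1 g) (hc : HasCompactSupport g) :
    ∫ x in {x : V2 | 0 ≤ x 1}, pd 1 g x = - ∫ s : ℝ, g ![s, 0] := by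
  rw [← integral_indicator meas_half, fubini2 _ ((pd_int hg hc 1).indicator meas_half), ← integral_neg]
  congr 1
  ext s
  rw [← int_half1 hg hc s, ← integral_indicator measurableSet_Ici]
  rfl

/-- affine functions -/
def aff (c : Fin 2 → ℝ) (r : ℝ) (x : V2) : ℝ := c 0 * x 0 + c 1 * x 1 + r

lemma aff_hasFDeriv (c : Fin 2 → ℝ) (r : ℝ) (x : V2) :
    HasFDerivAt (aff c r) (c 0 • ContinuousLinearMap.proj (R := ℝ) (φ := fun _ : Fin 2 => ℝ) 0 
      + c 1 • ContinuousLinearMap.proj (R := ℝ) (φ := fun _ : Fin 2 => ℝ) 1) x := by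
  unfold aff
  exact (((hasFDerivAt_apply 0 x).const_mul (c 0)).add
    ((hasFDerivAt_apply 1 x).const_mul (c 1))).add_const r

lemma aff_contDiff (c : Fin 2 → ℝ) (r : ℝ) {n} : ContDiff ℝ n (aff c r) := by
  unfold aff
  fun_prop

lemma pd_aff_mul (c : Fin 2 → ℝ) (r : ℝ) {φ : V2 → ℝ} (hφ : ContDiff ℝ (⊤ : ℕ∞) φ) (j : Fin 2) (x : V2) :
    pd j (fun x => aff c r x * φ x) x = aff c r x * pd j φ x + φ x * c j := by
  have h1 := aff_hasFDeriv c r x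
  have h2 : HasFDerivAt φ (fderiv ℝ φ x) x := (hφ.differentiable (by simp) _).hasFDerivAt
  unfold pd
  have h3 : HasFDerivAt (fun x => aff c r x * φ x) _ x := h1.mul h2
  rw [h3.fderiv]
  fin_cases j <;> simp

lemma ibp_aff (c d : Fin 2 → ℝ) (r r' : ℝ) {φ : V2 → ℝ} (hφ : ContDiff ℝ (⊤ : ℕ∞) φ)
    (hc : HasCompactSupport φ) (j : Fin 2) :
    ∫ x, (aff c r x + if 0 ≤ x 1 then aff d r' x else 0) * pd j φ x
      = - (∫ x, φ x * (c j + if 0 ≤ x 1 then d j else 0))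
        - e2 j * ∫ s : ℝ, φ ![s, 0] * (d 0 * s + r') := by
  have hφ1 : ContDiff ℝ 1 φ := hφ.of_le (by exact_mod_cast le_top)
  have A : ∀ (c : Fin 2 → ℝ) (r : ℝ), ContDiff ℝ 1 (fun x => aff c r x * φ x) := fun c r =>
    (aff_contDiff c r).mul hφ1
  have B : ∀ (c : Fin 2 → ℝ) (r : ℝ), HasCompactSupport (fun x => aff c r x * φ x) := fun c r =>
    hc.mul_left
  have hφi : Integrable φ := hφ.continuous.integrable_of_hasCompactSupport hc
  have t1 := int_total (A c r) (B c r) j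
  have t2 : ∫ x in {x : V2 | 0 ≤ x 1}, pd j (fun x => aff d r' x * φ x) x
      = - (e2 j * ∫ s : ℝ, φ ![s, 0] * (d 0 * s + r')) := by
    fin_cases j
    · simpa [e2] using int_H0 (A d r') (B d r')
    · have := int_H1 (A d r') (B d r')
      simp [e2] at this ⊢
      rw [this]
      congr 2
      ext s
      simp [aff]; ring
  have e : (fun x : V2 => (aff c r x + if 0 ≤ x 1 then aff d r' x else 0) * pd j φ x)
      = fun x => (pd j (fun x => aff c r x * φ x) x
        + {x : V2 | 0 ≤ x 1}.indicator (pd j (fun x => aff d r' x * φ x)) x)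
        - φ x * (c j + if 0 ≤ x 1 then d j else 0) := by
    ext x
    rw [pd_aff_mul c r hφ]
    by_cases hx : 0 ≤ x 1
    · simp only [indicator, mem_ofPred_eq, hx, if_true]
      rw [pd_aff_mul d r' hφ]; ring
    · simp only [indicator, mem_ofPred_eq, hx, if_false]
      ring
  have i3 : Integrable (fun x : V2 => φ x * (c j + if 0 ≤ x 1 then d j else 0)) := by
    have : (fun x : V2 => φ x * (c j + if 0 ≤ x 1 then d j else 0))
      = fun x => φ x * c j + {x : V2 | 0 ≤ x 1}.indicator (fun x => φ x * d j) x := by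
      ext x
      by_cases hx : 0 ≤ x 1 <;> simp [indicator, hx]
      ring
    rw [this]
    exact (hφi.mul_const _).add ((hφi.mul_const _).indicator meas_half)
  have i1 := pd_int (A c r) (B c r) j
  have i2 := (pd_int (A d r') (B d r') j).indicator meas_half
  have i12 : Integrable (fun x => pd j (fun x => aff c r x * φ x) x
        + {x : V2 | 0 ≤ x 1}.indicator (pd j (fun x => aff d r' x * φ x)) x) := i1.add i2
  rw [e, integral_sub i12 i3, integral_add i1 i2, t1, integral_indicator meas_half, t2]
  ring

lemma null_line (c : Fin 2 → ℝ) (hc : c ≠ 0) (r : ℝ) :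
    volume {x : V2 | c 0 * x 0 + c 1 * x 1 = r} = 0 := by
  let L : V2 →ₗ[ℝ] ℝ := c 0 • LinearMap.proj 0 + c 1 • LinearMap.proj 1
  have hL : ∀ x, L x = c 0 * x 0 + c 1 * x 1 := fun x => by simp [L]
  have hpos : c 0 * c 0 + c 1 * c 1 ≠ 0 := by
    intro h
    apply hc
    have h0 : c 0 = 0 := by nlinarith [mul_self_nonneg (c 0), mul_self_nonneg (c 1)]
    have h1 : c 1 = 0 := by nlinarith [mul_self_nonneg (c 0), mul_self_nonneg (c 1)]
    ext i; fin_cases i <;> simp [h0, h1]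
  have hker : volume (LinearMap.ker L : Set V2) = 0 := by
    apply Measure.addHaar_submodule
    intro htop
    apply hpos
    have : c ∈ LinearMap.ker L := by rw [htop]; trivial
    rw [LinearMap.mem_ker, hL] at this
    exact this
  let p : V2 := (r / (c 0 * c 0 + c 1 * c 1)) • c
  have hp : L p = r := by
    rw [map_smul, hL, smul_eq_mul, div_mul_cancel₀ _ hpos]
  have : {x : V2 | c 0 * x 0 + c 1 * x 1 = r} = (fun x => x + (-p)) ⁻¹' (LinearMap.ker L : Set V2) := by
    ext x
    rw [mem_preimage, SetLike.mem_coe, LinearMap.mem_ker, map_add, map_neg, hp, hL, mem_ofPred_eq]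
    constructor <;> intro h <;> linarith
  rw [this, measure_preimage_add_right, hker]

/-- the jump at height zero -/
def jmp (B : Mat2) (w : V2) (s : ℝ) : V2 := fun i => B i 0 * s + w i

lemma jmp_cont (B : Mat2) (w : V2) (i : Fin 2) : Continuous (fun s => jmp B w s i) := by
  unfold jmp; fun_prop

lemma vjmp_cont (B : Mat2) (w : V2) : Continuous (fun s => vnorm (jmp B w s)) := by
  have h0 := jmp_cont B w 0
  have h1 := jmp_cont B w 1
  unfold vnorm; fun_prop

def jsig (B : Mat2) (w : V2) : Measure V2 :=
  ((volume.restrict (Ioo (0:ℝ) 1)).withDensity (fun s => ENNReal.ofReal (vnorm (jmp B w s)))).map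
    (fun s => ![s, 0])

def jgs (B : Mat2) (w : V2) (x : V2) : Mat2 :=
  outer (fun i => (vnorm (jmp B w (x 0)))⁻¹ * jmp B w (x 0) i) e2

lemma jgs_meas (B : Mat2) (w : V2) (i j : Fin 2) : Measurable (fun x => jgs B w x i j) := by
  have h0 := (jmp_cont B w i).measurable
  have h1 := (vjmp_cont B w).measurable
  unfold jgs outer
  simp only [Matrix.of_apply]
  exact ((h1.comp (measurable_pi_apply 0)).inv.mul (h0.comp (measurable_pi_apply 0))).mul_const _

lemma iota_meas : Measurable (fun s : ℝ => (![s, 0] : V2)) := (sl_contDiff0 0).continuous.measurable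

lemma vnorm_eq_zero {v : V2} (h : vnorm v = 0) : v = 0 := by
  unfold vnorm at h
  rw [Real.sqrt_eq_zero (by positivity)] at h
  have h0 : v 0 = 0 := by nlinarith [sq_nonneg (v 0), sq_nonneg (v 1)]
  have h1 : v 1 = 0 := by nlinarith [sq_nonneg (v 0), sq_nonneg (v 1)]
  ext i; fin_cases i <;> simp [h0, h1]

lemma jsig_int (B : Mat2) (w : V2) {φ : V2 → ℝ} (hφ : Continuous φ) (hs : tsupport φ ⊆ Rect) (i j : Fin 2) :
    ∫ x, φ x * jgs B w x i j ∂(jsig B w) = e2 j * ∫ s : ℝ, φ ![s, 0] * (B i 0 * s + w i) := by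
  unfold jsig
  have hm : Measurable (fun x => φ x * jgs B w x i j) := hφ.measurable.mul (jgs_meas B w i j)
  rw [integral_map iota_meas.aemeasurable hm.aestronglyMeasurable]
  rw [integral_withDensity_eq_integral_toReal_smul (vjmp_cont B w).measurable.ennreal_ofReal
    (Eventually.of_forall (fun s => ENNReal.ofReal_lt_top))]
  rw [← integral_const_mul]
  rw [← setIntegral_eq_integral_of_forall_compl_eq_zero (s := Ioo (0:ℝ) 1)
    (f := fun s => e2 j * (φ ![s, 0] * (B i 0 * s + w i)))]
  · congr 1
    ext s
    have hv : 0 ≤ vnorm (jmp B w s) := Real.sqrt_nonneg _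
    rw [ENNReal.toReal_ofReal hv]
    simp only [jgs, outer, Matrix.of_apply, smul_eq_mul, Matrix.cons_val_zero]
    change _ = e2 j * (φ ![s, 0] * (jmp B w s i))
    by_cases h : vnorm (jmp B w s) = 0
    · rw [h, vnorm_eq_zero h]; simp
    · field_simp
  · intro s hs'
    rw [image_eq_zero_of_notMem_tsupport (fun hh => hs' (hs hh).1)]
    ring

lemma bv_u (Rp Rm : Mat2) (ψp ψm : V2)
    (u : V2 → V2)
    (hform : ∀ᵐ x ∂(volume.restrict Rect),
      u x = ((if 0 ≤ x 1 then Rp else Rm).mulVec x) + (if 0 ≤ x 1 then ψp else ψm)) :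
    HasBVDerivOn Rect u (fun x => if 0 ≤ x 1 then Rp else Rm) (jsig (Rp - Rm) (ψp - ψm))
      (jgs (Rp - Rm) (ψp - ψm)) := by
  have hcomp : ∀ i, ∀ᵐ x ∂(volume.restrict Rect), u x i = aff (Rm i) (ψm i) x
      + if 0 ≤ x 1 then aff ((Rp - Rm) i) ((ψp - ψm) i) x else 0 := by
    intro i
    filter_upwards [hform] with x hx
    rw [hx]
    by_cases h : 0 ≤ x 1 <;> fin_cases i <;> simp [h, aff] <;> ring
  have hbR : ∀ x ∈ Rect, |x 0| ≤ 1 ∧ |x 1| ≤ 1 := by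
    intro x hx
    exact ⟨abs_le.2 ⟨by linarith [hx.1.1], hx.1.2.le⟩, abs_le.2 ⟨hx.2.1.le, hx.2.2.le⟩⟩
  have haffi : ∀ c r, Integrable (aff c r) (volume.restrict Rect) := by
    intro c r
    refine Integrable.of_bound (aff_contDiff c r (n := 0)).continuous.aestronglyMeasurable
      (|c 0| + |c 1| + |r|) ?_
    rw [ae_restrict_iff' isOpen_Rect.measurableSet]
    refine Eventually.of_forall (fun x hx => ?_)
    obtain ⟨h0, h1⟩ := hbR x hx
    unfold aff
    rw [Real.norm_eq_abs]
    refine (abs_add_three _ _ _).trans ?_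
    rw [abs_mul, abs_mul]
    have := mul_le_of_le_one_right (abs_nonneg (c 0)) h0
    have := mul_le_of_le_one_right (abs_nonneg (c 1)) h1
    linarith
  constructor
  · apply Integrable.of_eval
    intro i
    have : Integrable (fun x => aff (Rm i) (ψm i) x
      + {x : V2 | 0 ≤ x 1}.indicator (aff ((Rp - Rm) i) ((ψp - ψm) i)) x) (volume.restrict Rect) :=
      (haffi _ _).add ((haffi _ _).indicator meas_half)
    exact this.congr ((hcomp i).mono (fun x hx => hx.symm))
  · intro i j
    have : Integrable (fun x => Rm i j
      + {x : V2 | 0 ≤ x 1}.indicator (fun _ => Rp i j - Rm i j) x) (volume.restrict Rect) :=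
      (integrable_const _).add ((integrable_const _).indicator meas_half)
    refine this.congr (Eventually.of_forall (fun x => ?_))
    by_cases h : 0 ≤ x 1 <;> simp [indicator, h]
  · unfold jsig
    rw [Measure.map_apply iota_meas MeasurableSet.univ, preimage_univ,
      withDensity_apply _ MeasurableSet.univ, Measure.restrict_univ]
    have hi : IntegrableOn (fun s => vnorm (jmp (Rp - Rm) (ψp - ψm) s)) (Ioo 0 1) :=
      ((vjmp_cont _ _).integrableOn_Icc (a := 0) (b := 1)).mono_set Ioo_subset_Icc_self
    have := hi.lintegral_lt_top
    exact this.ne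
  · unfold jsig
    rw [Measure.map_apply iota_meas isOpen_Rect.measurableSet.compl]
    apply withDensity_absolutelyContinuous
    rw [Measure.restrict_apply (iota_meas isOpen_Rect.measurableSet.compl)]
    convert measure_empty (μ := volume)
    ext s
    simp [Rect]
  · refine ⟨{x : V2 | 0 = x 1}ᶜ, (measurableSet_eq_fun measurable_const (measurable_pi_apply 1)).compl, ?_, ?_⟩
    · unfold jsig
      rw [Measure.map_apply iota_meas
        (measurableSet_eq_fun measurable_const (measurable_pi_apply 1)).compl]
      have : (fun s : ℝ => (![s, 0] : V2)) ⁻¹' {x : V2 | 0 = x 1}ᶜ = ∅ := by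
        ext s
        simp
      rw [this, measure_empty]
    · rw [compl_compl]
      have := null_line ![0, 1] (by intro h; simpa using congrFun h 1) 0
      simpa [eq_comm] using this
  · intro i j
    exact (jgs_meas _ _ i j).aemeasurable
  · unfold jsig
    rw [ae_map_iff iota_meas.aemeasurable]
    · rw [ae_withDensity_iff (vjmp_cont _ _).measurable.ennreal_ofReal]
      refine Eventually.of_forall (fun s hs => ?_)
      set v := jmp (Rp - Rm) (ψp - ψm) s with hv
      have hpos : 0 < vnorm v := by
        by_contra h
        exact hs (ENNReal.ofReal_of_nonpos (not_lt.1 h))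
      have hsq : v 0 ^ 2 + v 1 ^ 2 = vnorm v ^ 2 := by
        unfold vnorm; rw [Real.sq_sqrt (by positivity)]
      unfold mnorm
      rw [Real.sqrt_eq_one]
      simp only [Fin.sum_univ_two, jgs, outer, Matrix.of_apply, Matrix.cons_val_zero, ← hv, e2,
        Matrix.cons_val_one]
      field_simp
      linarith
    · unfold mnorm
      have hm := fun i j => (jgs_meas (Rp - Rm) (ψp - ψm) i j)
      have : Measurable (fun x => √(∑ i, ∑ j, jgs (Rp - Rm) (ψp - ψm) x i j ^ 2)) := by fun_prop
      exact measurableSet_eq_fun this measurable_const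
  · intro φ hφ hc hs i j
    rw [jsig_int _ _ hφ.continuous hs]
    have h := ibp_aff (Rm i) ((Rp - Rm) i) (ψm i) ((ψp - ψm) i) hφ hc j
    have hz : ∀ x, x ∉ Rect → φ x = 0 := fun x hx =>
      image_eq_zero_of_notMem_tsupport (fun hh => hx (hs hh))
    have hz' : ∀ x, x ∉ Rect → pd j φ x = 0 := by
      intro x hx
      have : x ∉ tsupport (fderiv ℝ φ) := fun hh => hx (hs (tsupport_fderiv_subset ℝ hh))
      unfold pd
      rw [image_eq_zero_of_notMem_tsupport this]; rfl
    have s1 : ∫ x in Rect, u x i * pd j φ x = ∫ x, (aff (Rm i) (ψm i) x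
      + if 0 ≤ x 1 then aff ((Rp - Rm) i) ((ψp - ψm) i) x else 0) * pd j φ x := by
      rw [← setIntegral_eq_integral_of_forall_compl_eq_zero (s := Rect) (f := fun x => (aff (Rm i) (ψm i) x
        + if 0 ≤ x 1 then aff ((Rp - Rm) i) ((ψp - ψm) i) x else 0) * pd j φ x)]
      · apply integral_congr_ae
        filter_upwards [hcomp i] with x hx
        rw [hx]
      · intro x hx; rw [hz' x hx, mul_zero]
    have s2 : ∫ x in Rect, φ x * (if 0 ≤ x 1 then Rp else Rm) i j
        = ∫ x, φ x * (Rm i j + if 0 ≤ x 1 then (Rp - Rm) i j else 0) := by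
      rw [← setIntegral_eq_integral_of_forall_compl_eq_zero (s := Rect)
        (f := fun x => φ x * (Rm i j + if 0 ≤ x 1 then (Rp - Rm) i j else 0))]
      · congr 1
        ext x
        by_cases h : 0 ≤ x 1 <;> simp [h]
      · intro x hx; rw [hz x hx, zero_mul]
    rw [s1, s2, h]

/-- positive part -/
def pp (t : ℝ) : ℝ := max t 0
/-- Heaviside function -/
def Hv (t : ℝ) : ℝ := if 0 < t then 1 else 0

lemma pp_pos {t : ℝ} (h : 0 ≤ t) : pp t = t := max_eq_left h
lemma pp_neg {t : ℝ} (h : t ≤ 0) : pp t = 0 := max_eq_right h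
lemma Hv_pos {t : ℝ} (h : 0 < t) : Hv t = 1 := if_pos h
lemma Hv_neg {t : ℝ} (h : t ≤ 0) : Hv t = 0 := if_neg (not_lt.2 h)
lemma Hv_meas : Measurable Hv := Measurable.ite measurableSet_Ioi measurable_const measurable_const

lemma pp_deriv (a b : ℝ) (ha : a ≠ 0) : HasDerivAt (fun s : ℝ => pp (a + s * b)) (Hv a * b) 0 := by
  have hl : HasDerivAt (fun s : ℝ => a + s * b) b 0 := by
    simpa using ((hasDerivAt_id (0:ℝ)).mul_const b).const_add a
  have hcont : ContinuousAt (fun s : ℝ => a + s * b) 0 := hl.continuousAt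
  rcases lt_or_gt_of_ne ha with h | h
  · rw [Hv_neg h.le, zero_mul]
    have : ∀ᶠ s in 𝓝 (0:ℝ), a + s * b < 0 := hcont.eventually_lt_const (by simpa using h)
    exact (hasDerivAt_const (0:ℝ) (0:ℝ)).congr_of_eventuallyEq (this.mono (fun s hs => pp_neg hs.le))
  · rw [Hv_pos h, one_mul]
    have : ∀ᶠ s in 𝓝 (0:ℝ), 0 < a + s * b := hcont.eventually_const_lt (by simpa using h)
    exact hl.congr_of_eventuallyEq (this.mono (fun s hs => pp_pos hs.le))

def IsLip (f : V2 → ℝ) : Prop := ∃ K, LipschitzWith K f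

lemma IsLip.add {f g : V2 → ℝ} (hf : IsLip f) (hg : IsLip g) : IsLip (fun x => f x + g x) := by
  obtain ⟨K, hf⟩ := hf
  obtain ⟨L, hg⟩ := hg
  exact ⟨_, hf.add hg⟩
lemma IsLip.sub {f g : V2 → ℝ} (hf : IsLip f) (hg : IsLip g) : IsLip (fun x => f x - g x) := by
  obtain ⟨K, hf⟩ := hf
  obtain ⟨L, hg⟩ := hg
  exact ⟨_, hf.sub hg⟩
lemma IsLip.mul {f : V2 → ℝ} (c : ℝ) (hf : IsLip f) : IsLip (fun x => c * f x) := by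
  obtain ⟨K, hf⟩ := hf
  exact ⟨_, (lipschitzWith_smul c).comp hf⟩
lemma IsLip.pp {f : V2 → ℝ} (hf : IsLip f) : IsLip (fun x => pp (f x)) := by
  obtain ⟨K, hf⟩ := hf
  exact ⟨_, hf.max_const 0⟩
lemma IsLip.const (c : ℝ) : IsLip (fun _ => c) := ⟨0, LipschitzWith.const c⟩
lemma IsLip.x (i : Fin 2) : IsLip (fun x => x i) := ⟨1, LipschitzWith.eval i⟩
lemma IsLip.xd (i : Fin 2) (h : ℝ) : IsLip (fun x => x i / h) := by
  have := (IsLip.x i).mul h⁻¹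
  simpa [div_eq_inv_mul] using this

/-- the approximating maps -/
def vv (A S B : Mat2) (ψ : V2) (h τ₁ τ₂ α β : ℝ) (x : V2) : V2 := fun i =>
  A i 0 * x 0 + A i 1 * x 1 + ψ i
  + (S i 0 - A i 0) * (pp (x 0 - 1 + x 1 / h) - pp (x 1 / h - 1))
  + (B i 0 - S i 0) * (pp (x 0 - 3 + x 1 / h) - pp (x 1 / h - 3))
  + (S i 1 - A i 1) * (h * pp (x 1 / h - 1))
  + (B i 1 - S i 1) * (h * pp (x 1 / h - 3))
  + ((1 - h * τ₁) * A i 0) * (pp (x 1 / h) - pp (x 1 / h - 1))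
  + (α * S i 0) * (pp (x 1 / h - 1) - pp (x 1 / h - 2))
  + ((1 - h * τ₂) * S i 0) * (pp (x 1 / h - 2) - pp (x 1 / h - 3))
  + (β * B i 0) * (pp (x 1 / h - 3) - pp (x 1 / h - 4))

/-- formal derivative in direction `(w₀, w₁)` -/
def dv (A S B : Mat2) (h τ₁ τ₂ α β : ℝ) (x : V2) (w₀ w₁ : ℝ) (i : Fin 2) : ℝ :=
  A i 0 * w₀ + A i 1 * w₁
  + (S i 0 - A i 0) * (Hv (x 0 - 1 + x 1 / h) * (w₀ + w₁ / h) - Hv (x 1 / h - 1) * (w₁ / h))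
  + (B i 0 - S i 0) * (Hv (x 0 - 3 + x 1 / h) * (w₀ + w₁ / h) - Hv (x 1 / h - 3) * (w₁ / h))
  + (S i 1 - A i 1) * (h * (Hv (x 1 / h - 1) * (w₁ / h)))
  + (B i 1 - S i 1) * (h * (Hv (x 1 / h - 3) * (w₁ / h)))
  + ((1 - h * τ₁) * A i 0) * (Hv (x 1 / h) * (w₁ / h) - Hv (x 1 / h - 1) * (w₁ / h))
  + (α * S i 0) * (Hv (x 1 / h - 1) * (w₁ / h) - Hv (x 1 / h - 2) * (w₁ / h))
  + ((1 - h * τ₂) * S i 0) * (Hv (x 1 / h - 2) * (w₁ / h) - Hv (x 1 / h - 3) * (w₁ / h))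
  + (β * B i 0) * (Hv (x 1 / h - 3) * (w₁ / h) - Hv (x 1 / h - 4) * (w₁ / h))

/-- rotations -/
def RR (A S B : Mat2) (h : ℝ) (x : V2) : Mat2 :=
  if 0 < x 0 - 3 + x 1 / h then B else if 0 < x 0 - 1 + x 1 / h then S else A

/-- shears -/
def gam (h τ₁ τ₂ α β : ℝ) (x : V2) : ℝ :=
  h⁻¹ * ((Hv (x 1 / h) - Hv (x 1 / h - 1)) * (1 - h * τ₁ + 2 * h * τ₁ * Hv (x 0 - 1 + x 1 / h))
    + α * (Hv (x 1 / h - 1) - Hv (x 1 / h - 2))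
    + (Hv (x 1 / h - 2) - Hv (x 1 / h - 3)) * (1 - h * τ₂ + 2 * h * τ₂ * Hv (x 0 - 3 + x 1 / h))
    + β * (Hv (x 1 / h - 3) - Hv (x 1 / h - 4)))

lemma vv_lip (A S B : Mat2) (ψ : V2) (h τ₁ τ₂ α β : ℝ) (i : Fin 2) :
    IsLip (fun x => vv A S B ψ h τ₁ τ₂ α β x i) := by
  have t : ∀ k : ℝ, IsLip (fun x => pp (x 1 / h - k)) := fun k =>
    ((IsLip.xd 1 h).sub (IsLip.const k)).pp
  have t0 : IsLip (fun x => pp (x 1 / h)) := (IsLip.xd 1 h).pp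
  have y : ∀ k : ℝ, IsLip (fun x => pp (x 0 - k + x 1 / h)) := fun k =>
    (((IsLip.x 0).sub (IsLip.const k)).add (IsLip.xd 1 h)).pp
  unfold vv
  exact (((((((((((IsLip.x 0).mul _).add ((IsLip.x 1).mul _)).add (IsLip.const _)).add
    (((y 1).sub (t 1)).mul _)).add (((y 3).sub (t 3)).mul _)).add (((t 1).mul h).mul _)).add
    (((t 3).mul h).mul _)).add ((t0.sub (t 1)).mul _)).add (((t 1).sub (t 2)).mul _)).add
    (((t 2).sub (t 3)).mul _)).add (((t 3).sub (t 4)).mul _)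

/-- the good points -/
def Good (h : ℝ) (x : V2) : Prop :=
  x 1 / h ≠ 0 ∧ x 1 / h - 1 ≠ 0 ∧ x 1 / h - 2 ≠ 0 ∧ x 1 / h - 3 ≠ 0 ∧ x 1 / h - 4 ≠ 0 ∧
    x 0 - 1 + x 1 / h ≠ 0 ∧ x 0 - 3 + x 1 / h ≠ 0

lemma good_ae (h : ℝ) (hh : 0 < h) : ∀ᵐ x : V2, Good h x := by
  have n1 : ∀ k : ℝ, ∀ᵐ x : V2, x 1 / h - k ≠ 0 := by
    intro k
    have := null_line ![0, 1] (by intro h; simpa using congrFun h 1) (k * h)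
    rw [ae_iff]
    refine measure_mono_null (fun x hx => ?_) this
    simp only [mem_ofPred_eq, not_not] at hx
    have : x 1 = k * h := by
      field_simp at hx; linarith
    simpa using this
  have n2 : ∀ k : ℝ, ∀ᵐ x : V2, x 0 - k + x 1 / h ≠ 0 := by
    intro k
    have := null_line ![1, 1 / h] (by intro h; simpa using congrFun h 0) k
    rw [ae_iff]
    refine measure_mono_null (fun x hx => ?_) this
    simp only [mem_ofPred_eq, not_not] at hx
    have : 1 * x 0 + 1 / h * x 1 = k := by
      have : 1 / h * x 1 = x 1 / h := by ring
      linarith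
    simpa using this
  filter_upwards [n1 0, n1 1, n1 2, n1 3, n1 4, n2 1, n2 3] with x h0 h1 h2 h3 h4 h5 h6
  exact ⟨by simpa using h0, h1, h2, h3, h4, h5, h6⟩

lemma vv_deriv (A S B : Mat2) (ψ : V2) (h τ₁ τ₂ α β : ℝ) (x : V2) (hx : Good h x) (w : V2) (i : Fin 2) :
    HasLineDerivAt ℝ (fun x => vv A S B ψ h τ₁ τ₂ α β x i) (dv A S B h τ₁ τ₂ α β x (w 0) (w 1) i) x w := by
  obtain ⟨h0, h1, h2, h3, h4, h5, h6⟩ := hx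
  have t0 : HasDerivAt (fun s : ℝ => pp ((x + s • w) 1 / h)) (Hv (x 1 / h) * (w 1 / h)) 0 := by
    have := pp_deriv (x 1 / h) (w 1 / h) h0
    convert this using 3 with s
    simp; ring
  have t : ∀ k : ℝ, x 1 / h - k ≠ 0 →
      HasDerivAt (fun s : ℝ => pp ((x + s • w) 1 / h - k)) (Hv (x 1 / h - k) * (w 1 / h)) 0 := by
    intro k hk
    have := pp_deriv (x 1 / h - k) (w 1 / h) hk
    convert this using 3 with s
    simp; ring
  have y : ∀ k : ℝ, x 0 - k + x 1 / h ≠ 0 →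
      HasDerivAt (fun s : ℝ => pp ((x + s • w) 0 - k + (x + s • w) 1 / h))
        (Hv (x 0 - k + x 1 / h) * (w 0 + w 1 / h)) 0 := by
    intro k hk
    have := pp_deriv (x 0 - k + x 1 / h) (w 0 + w 1 / h) hk
    convert this using 3 with s
    simp; ring
  have z : ∀ j : Fin 2, HasDerivAt (fun s : ℝ => (x + s • w) j) (w j) 0 := by
    intro j
    simpa using ((hasDerivAt_id (0:ℝ)).mul_const (w j)).const_add (x j)
  unfold HasLineDerivAt vv dv
  exact (((((((((((z 0).const_mul _).add ((z 1).const_mul _)).add_const _).add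
    (((y 1 h5).sub (t 1 h1)).const_mul _)).add (((y 3 h6).sub (t 3 h3)).const_mul _)).add
    (((t 1 h1).const_mul h).const_mul _)).add
    (((t 3 h3).const_mul h).const_mul _)).add ((t0.sub (t 1 h1)).const_mul _)).add
    (((t 1 h1).sub (t 2 h2)).const_mul _)).add
    (((t 2 h2).sub (t 3 h3)).const_mul _)).add (((t 3 h3).sub (t 4 h4)).const_mul _)

lemma dv_eq (A S B : Mat2) (h τ₁ τ₂ α β : ℝ) (hh : 0 < h) (x : V2) (hx : Good h x)
    (hx0 : x 0 ∈ Ioo (0:ℝ) 1)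
    (E1 : ∀ i, A i 1 - τ₁ * A i 0 = S i 1 + τ₁ * S i 0)
    (E2 : ∀ i, S i 1 - τ₂ * S i 0 = B i 1 + τ₂ * B i 0) (w₀ w₁ : ℝ) (i : Fin 2) :
    dv A S B h τ₁ τ₂ α β x w₀ w₁ i = RR A S B h x i 0 * w₀ +
      (RR A S B h x i 1 + gam h τ₁ τ₂ α β x * RR A S B h x i 0) * w₁ := by
  obtain ⟨h0, h1, h2, h3, h4, h5, h6⟩ := hx
  have E1 := E1 i
  have E2 := E2 i
  unfold dv RR gam
  set t := x 1 / h with ht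
  obtain ⟨ha, hb⟩ := hx0
  have hne : h ≠ 0 := hh.ne'
  rcases lt_or_gt_of_ne h0 with c0 | c0
  · rw [Hv_neg (t := t) (by linarith), Hv_neg (t := t - 1) (by linarith), Hv_neg (t := t - 2) (by linarith),
      Hv_neg (t := t - 3) (by linarith), Hv_neg (t := t - 4) (by linarith),
      Hv_neg (t := x 0 - 1 + t) (by linarith), Hv_neg (t := x 0 - 3 + t) (by linarith),
      if_neg (by linarith), if_neg (by linarith)]
    ring
  rcases lt_or_gt_of_ne h1 with c1 | c1
  · rw [Hv_pos (t := t) (by linarith), Hv_neg (t := t - 1) (by linarith), Hv_neg (t := t - 2) (by linarith),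
      Hv_neg (t := t - 3) (by linarith), Hv_neg (t := t - 4) (by linarith),
      Hv_neg (t := x 0 - 3 + t) (by linarith), if_neg (by linarith)]
    rcases lt_or_gt_of_ne h5 with c5 | c5
    · rw [Hv_neg (t := x 0 - 1 + t) (by linarith), if_neg (by linarith)]
      field_simp
      ring
    · rw [Hv_pos (t := x 0 - 1 + t) (by linarith), if_pos (by linarith)]
      field_simp
      linear_combination (w₁ * h) * E1
  rcases lt_or_gt_of_ne h2 with c2 | c2
  · rw [Hv_pos (t := t) (by linarith), Hv_pos (t := t - 1) (by linarith), Hv_neg (t := t - 2) (by linarith),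
      Hv_neg (t := t - 3) (by linarith), Hv_neg (t := t - 4) (by linarith),
      Hv_pos (t := x 0 - 1 + t) (by linarith), Hv_neg (t := x 0 - 3 + t) (by linarith),
      if_neg (by linarith), if_pos (by linarith)]
    field_simp
    ring
  rcases lt_or_gt_of_ne h3 with c3 | c3
  · rw [Hv_pos (t := t) (by linarith), Hv_pos (t := t - 1) (by linarith), Hv_pos (t := t - 2) (by linarith),
      Hv_neg (t := t - 3) (by linarith), Hv_neg (t := t - 4) (by linarith),
      Hv_pos (t := x 0 - 1 + t) (by linarith)]
    rcases lt_or_gt_of_ne h6 with c6 | c6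
    · rw [Hv_neg (t := x 0 - 3 + t) (by linarith), if_neg (by linarith), if_pos (by linarith)]
      field_simp
      ring
    · rw [Hv_pos (t := x 0 - 3 + t) (by linarith), if_pos (by linarith)]
      field_simp
      linear_combination (w₁ * h) * E2
  rcases lt_or_gt_of_ne h4 with c4 | c4
  · rw [Hv_pos (t := t) (by linarith), Hv_pos (t := t - 1) (by linarith), Hv_pos (t := t - 2) (by linarith),
      Hv_pos (t := t - 3) (by linarith), Hv_neg (t := t - 4) (by linarith),
      Hv_pos (t := x 0 - 1 + t) (by linarith), Hv_pos (t := x 0 - 3 + t) (by linarith),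
      if_pos (by linarith)]
    field_simp
    ring
  · rw [Hv_pos (t := t) (by linarith), Hv_pos (t := t - 1) (by linarith), Hv_pos (t := t - 2) (by linarith),
      Hv_pos (t := t - 3) (by linarith), Hv_pos (t := t - 4) (by linarith),
      Hv_pos (t := x 0 - 1 + t) (by linarith), Hv_pos (t := x 0 - 3 + t) (by linarith),
      if_pos (by linarith)]
    field_simp
    ring

lemma SO2_iff (R : Mat2) : R ∈ SO2 ↔ R 1 1 = R 0 0 ∧ R 0 1 = - R 1 0 ∧ R 0 0 ^ 2 + R 1 0 ^ 2 = 1 := by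
  constructor
  · rintro ⟨h1, h2⟩
    have a := congrFun (congrFun h1 0) 0
    have b := congrFun (congrFun h1 0) 1
    have c := congrFun (congrFun h1 1) 1
    simp [Matrix.mul_apply, Fin.sum_univ_two] at a b c
    rw [Matrix.det_fin_two] at h2
    have e1 : R 1 1 = R 0 0 := by
      linear_combination R 0 0 * h2 - R 1 1 * a + R 0 1 * b
    have e2 : R 0 1 = - R 1 0 := by
      linear_combination (-R 1 0) * a + R 0 0 * b - R 0 1 * h2
    refine ⟨e1, e2, ?_⟩
    rw [e2] at a
    linear_combination a
  · rintro ⟨e1, e2, e3⟩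
    refine ⟨?_, ?_⟩
    · ext i j
      fin_cases i <;> fin_cases j <;> simp [Matrix.mul_apply, Fin.sum_univ_two, e1, e2]
      · linear_combination e3
      · ring
      · ring
      · linear_combination e3
    · rw [Matrix.det_fin_two, e1, e2]; linear_combination e3

lemma SO2_le {R : Mat2} (h : R ∈ SO2) (i j : Fin 2) : |R i j| ≤ 1 := by
  obtain ⟨e1, e2, e3⟩ := (SO2_iff R).1 h
  have a : |R 0 0| ≤ 1 := by
    rw [abs_le_one_iff_mul_self_le_one]; nlinarith [sq_nonneg (R 1 0)]
  have b : |R 1 0| ≤ 1 := by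
    rw [abs_le_one_iff_mul_self_le_one]; nlinarith [sq_nonneg (R 0 0)]
  fin_cases i <;> fin_cases j <;> simp [e1, e2, a, b]

lemma exists_tau {A S : Mat2} (hA : A ∈ SO2) (hS : S ∈ SO2)
    (hne : 1 + (A 0 0 * S 0 0 + A 1 0 * S 1 0) ≠ 0) :
    ∃ τ : ℝ, ∀ i, A i 1 - τ * A i 0 = S i 1 + τ * S i 0 := by
  obtain ⟨a1, a2, a3⟩ := (SO2_iff A).1 hA
  obtain ⟨s1, s2, s3⟩ := (SO2_iff S).1 hS
  refine ⟨(A 0 0 * S 1 0 - A 1 0 * S 0 0) / (1 + (A 0 0 * S 0 0 + A 1 0 * S 1 0)), ?_⟩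
  intro i
  fin_cases i
  · simp only [Fin.zero_eta, a2, s2]
    rw [← sub_eq_zero, ← mul_eq_zero_iff_right hne]
    have := div_mul_cancel₀ (A 0 0 * S 1 0 - A 1 0 * S 0 0) hne
    linear_combination (-(A 0 0) - S 0 0) * this + S 1 0 * (-a3) + A 1 0 * s3
  · simp only [Fin.mk_one, a1, s1]
    rw [← sub_eq_zero, ← mul_eq_zero_iff_right hne]
    have := div_mul_cancel₀ (A 0 0 * S 1 0 - A 1 0 * S 0 0) hne
    linear_combination (-(A 1 0) - S 1 0) * this + S 0 0 * a3 - A 0 0 * s3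

lemma exists_params (A B : Mat2) (hA : A ∈ SO2) (hB : B ∈ SO2) (w : V2) :
    ∃ S ∈ SO2, ∃ τ₁ τ₂ α β : ℝ, (∀ i, A i 1 - τ₁ * A i 0 = S i 1 + τ₁ * S i 0) ∧
      (∀ i, S i 1 - τ₂ * S i 0 = B i 1 + τ₂ * B i 0) ∧
      (∀ i, A i 0 + α * S i 0 + S i 0 + β * B i 0 = w i) := by
  obtain ⟨b1, b2, b3⟩ := (SO2_iff B).1 hB
  have key : ∃ s : ℝ, s ^ 2 = 1 ∧ 1 + (A 0 0 * (- (s * B 1 0)) + A 1 0 * (s * B 0 0)) ≠ 0 := by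
    by_cases h : 1 + (A 0 0 * (- (1 * B 1 0)) + A 1 0 * (1 * B 0 0)) ≠ 0
    · exact ⟨1, by norm_num, h⟩
    · refine ⟨-1, by norm_num, fun h' => ?_⟩
      push Not at h
      linarith
  obtain ⟨s, hs, hne⟩ := key
  let S : Mat2 := !![-(s * B 1 0), -(s * B 0 0); s * B 0 0, -(s * B 1 0)]
  have hS : S ∈ SO2 := by
    rw [SO2_iff]
    refine ⟨by simp [S], by simp [S], ?_⟩
    simp [S]
    linear_combination (B 0 0 ^2 + B 1 0 ^ 2) * hs + b3
  obtain ⟨τ₁, h1⟩ := exists_tau hA hS (by simpa [S] using hne)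
  obtain ⟨τ₂, h2⟩ := exists_tau hS hB (by
    simp [S]
    have : -(s * B 1 0 * B 0 0) + s * B 0 0 * B 1 0 = 0 := by ring
    rw [this]; norm_num)
  refine ⟨S, hS, τ₁, τ₂, (w 0 - A 0 0) * S 0 0 + (w 1 - A 1 0) * S 1 0 - 1,
    (w 0 - A 0 0) * B 0 0 + (w 1 - A 1 0) * B 1 0, h1, h2, ?_⟩
  intro i
  fin_cases i
  · simp [S]
    linear_combination (w 0 - A 0 0) * b3 + ((w 0 - A 0 0) * B 1 0 * B 1 0 - (w 1 - A 1 0) * B 0 0 * B 1 0) * hs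
  · simp [S]
    linear_combination (w 1 - A 1 0) * b3 + ((w 1 - A 1 0) * B 0 0 * B 0 0 - (w 0 - A 0 0) * B 0 0 * B 1 0) * hs

lemma RR_SO2 {A S B : Mat2} (hA : A ∈ SO2) (hS : S ∈ SO2) (hB : B ∈ SO2) (h : ℝ) (x : V2) :
    RR A S B h x ∈ SO2 := by
  unfold RR; split_ifs <;> assumption

lemma RR_meas (A S B : Mat2) (h : ℝ) (i j : Fin 2) : Measurable (fun x => RR A S B h x i j) := by
  have m : ∀ k : ℝ, MeasurableSet {x : V2 | 0 < x 0 - k + x 1 / h} := fun k =>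
    measurableSet_lt measurable_const (by fun_prop)
  have : (fun x => RR A S B h x i j) = fun x => if 0 < x 0 - 3 + x 1 / h then B i j else
      if 0 < x 0 - 1 + x 1 / h then S i j else A i j := by
    funext x; unfold RR; split_ifs <;> rfl
  rw [this]
  exact Measurable.ite (m 3) measurable_const (Measurable.ite (m 1) measurable_const measurable_const)

lemma gam_meas (h τ₁ τ₂ α β : ℝ) : Measurable (gam h τ₁ τ₂ α β) := by
  have t0 : Measurable (fun x : V2 => Hv (x 1 / h)) := Hv_meas.comp (by fun_prop)
  have t : ∀ k : ℝ, Measurable (fun x : V2 => Hv (x 1 / h - k)) := fun k => Hv_meas.comp (by fun_prop)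
  have y : ∀ k : ℝ, Measurable (fun x : V2 => Hv (x 0 - k + x 1 / h)) := fun k =>
    Hv_meas.comp (by fun_prop)
  have := t 1
  have := t 2
  have := t 3
  have := t 4
  have := y 1
  have := y 3
  unfold gam
  fun_prop

lemma Hv_diff' (a b : ℝ) : |Hv a - Hv b| ≤ 1 := by
  unfold Hv
  split_ifs <;> simp

lemma Hv_fac (h H τ s : ℝ) (hh : 0 < h) (hH : h ≤ H) :
    |1 - h * τ + 2 * h * τ * Hv s| ≤ 1 + H * |τ| := by
  have h1 : |h * τ| ≤ H * |τ| := by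
    rw [abs_mul, abs_of_pos hh]; gcongr
  have h2 := abs_le.1 h1
  unfold Hv
  split_ifs <;> rw [abs_le] <;> constructor <;> linarith [h2.1, h2.2]

/-- the bound constant -/
def KK (H τ₁ τ₂ α β : ℝ) : ℝ := (1 + H * |τ₁|) + |α| + (1 + H * |τ₂|) + |β|

lemma gam_le (h H τ₁ τ₂ α β : ℝ) (hh : 0 < h) (hH : h ≤ H) (x : V2) :
    |gam h τ₁ τ₂ α β x| ≤ h⁻¹ * KK H τ₁ τ₂ α β := by
  unfold gam KK
  rw [abs_mul, abs_of_pos (inv_pos.2 hh)]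
  gcongr
  refine (abs_add_le _ _).trans (add_le_add ((abs_add_le _ _).trans (add_le_add
    ((abs_add_le _ _).trans (add_le_add ?_ ?_)) ?_)) ?_)
  · rw [abs_mul]
    calc _ ≤ 1 * (1 + H * |τ₁|) := mul_le_mul (Hv_diff' _ _) (Hv_fac _ _ _ _ hh hH) (abs_nonneg _) zero_le_one
      _ = _ := one_mul _
  · rw [abs_mul]
    exact mul_le_of_le_one_right (abs_nonneg _) (Hv_diff' _ _)
  · rw [abs_mul]
    calc _ ≤ 1 * (1 + H * |τ₂|) := mul_le_mul (Hv_diff' _ _) (Hv_fac _ _ _ _ hh hH) (abs_nonneg _) zero_le_one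
      _ = _ := one_mul _
  · rw [abs_mul]
    exact mul_le_of_le_one_right (abs_nonneg _) (Hv_diff' _ _)

lemma gam_lo (h τ₁ τ₂ α β : ℝ) (x : V2) (hx : x 1 / h ≤ 0) : gam h τ₁ τ₂ α β x = 0 := by
  unfold gam
  set t := x 1 / h with ht
  rw [Hv_neg (t := t) (by linarith), Hv_neg (t := t - 1) (by linarith), Hv_neg (t := t - 2) (by linarith),
      Hv_neg (t := t - 3) (by linarith), Hv_neg (t := t - 4) (by linarith)]
  ring

lemma gam_hi (h τ₁ τ₂ α β : ℝ) (x : V2) (hx : 4 < x 1 / h) : gam h τ₁ τ₂ α β x = 0 := by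
  unfold gam
  set t := x 1 / h with ht
  rw [Hv_pos (t := t) (by linarith), Hv_pos (t := t - 1) (by linarith), Hv_pos (t := t - 2) (by linarith),
      Hv_pos (t := t - 3) (by linarith), Hv_pos (t := t - 4) (by linarith)]
  ring

lemma gam_int (h H τ₁ τ₂ α β : ℝ) (hh : 0 < h) (hH : h ≤ H) :
    IntegrableOn (gam h τ₁ τ₂ α β) Rect volume :=
  Integrable.of_bound (gam_meas h τ₁ τ₂ α β).aestronglyMeasurable (h⁻¹ * KK H τ₁ τ₂ α β)
    (Eventually.of_forall (gam_le h H τ₁ τ₂ α β hh hH))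

lemma gam_l1 (h H τ₁ τ₂ α β : ℝ) (hh : 0 < h) (hH : h ≤ H) :
    ∫ x in Rect, |gam h τ₁ τ₂ α β x| ≤ 4 * KK H τ₁ τ₂ α β := by
  have hK : 0 ≤ KK H τ₁ τ₂ α β := by
    have := hh.le.trans hH
    unfold KK; positivity
  let T : Set V2 := {x | 0 < x 1 ∧ x 1 ≤ 4 * h}
  have hT : MeasurableSet T := (measurableSet_lt measurable_const (measurable_pi_apply 1)).inter
    (measurableSet_le (measurable_pi_apply 1) measurable_const)
  have hvol : (volume.restrict Rect).real T ≤ 4 * h := by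
    have sub : T ∩ Rect ⊆ Set.pi Set.univ (fun i : Fin 2 => Icc ((![0, 0] : V2) i) ((![1, 4 * h] : V2) i)) := by
      rintro x ⟨⟨h1, h2⟩, h3, h4⟩ i -
      fin_cases i
      · exact ⟨h3.1.le, h3.2.le⟩
      · exact ⟨h1.le, h2⟩
    have e : volume (Set.pi Set.univ (fun i : Fin 2 => Icc ((![0, 0] : V2) i) ((![1, 4 * h] : V2) i)))
        = ENNReal.ofReal (4 * h) := by
      rw [volume_pi_pi]; simp [Fin.prod_univ_two]
    rw [measureReal_def, Measure.restrict_apply hT]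
    apply ENNReal.toReal_le_of_le_ofReal (by positivity)
    rw [← e]
    exact measure_mono sub
  calc ∫ x in Rect, |gam h τ₁ τ₂ α β x| ≤ ∫ x in Rect, T.indicator (fun _ => h⁻¹ * KK H τ₁ τ₂ α β) x := by
        apply integral_mono_of_nonneg (Eventually.of_forall (fun x => abs_nonneg _))
        · exact (integrable_const _).indicator hT
        · refine Eventually.of_forall (fun x => ?_)
          by_cases hx : x ∈ T
          · simpa [hx] using gam_le h H τ₁ τ₂ α β hh hH x
          · simp only [hx, not_false_eq_true, indicator_of_notMem]
            have : gam h τ₁ τ₂ α β x = 0 := by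
              by_cases h1 : 0 < x 1
              · apply gam_hi
                rw [lt_div_iff₀ hh]
                by_contra h2
                exact hx ⟨h1, not_lt.1 h2⟩
              · apply gam_lo
                exact div_nonpos_of_nonpos_of_nonneg (not_lt.1 h1) hh.le
            rw [this, abs_zero]
    _ = (volume.restrict Rect).real T * (h⁻¹ * KK H τ₁ τ₂ α β) := by
        rw [integral_indicator_const _ hT, smul_eq_mul]
    _ ≤ (4 * h) * (h⁻¹ * KK H τ₁ τ₂ α β) := by gcongr
    _ = _ := by field_simp

/-- gradient matrix -/
def GG (A S B : Mat2) (h τ₁ τ₂ α β : ℝ) (x : V2) : Mat2 :=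
  RR A S B h x * (1 + gam h τ₁ τ₂ α β x • outer e1 e2)

lemma GG_0 (A S B : Mat2) (h τ₁ τ₂ α β : ℝ) (x : V2) (i : Fin 2) :
    GG A S B h τ₁ τ₂ α β x i 0 = RR A S B h x i 0 := by
  simp [GG, Matrix.mul_apply, Fin.sum_univ_two, outer, e1, e2]

lemma GG_1 (A S B : Mat2) (h τ₁ τ₂ α β : ℝ) (x : V2) (i : Fin 2) :
    GG A S B h τ₁ τ₂ α β x i 1 = RR A S B h x i 1 + gam h τ₁ τ₂ α β x * RR A S B h x i 0 := by
  simp [GG, Matrix.mul_apply, Fin.sum_univ_two, outer, e1, e2]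
  ring

lemma GG_le {A S B : Mat2} (hA : A ∈ SO2) (hS : S ∈ SO2) (hB : B ∈ SO2) (h τ₁ τ₂ α β : ℝ) (x : V2)
    (i j : Fin 2) : |GG A S B h τ₁ τ₂ α β x i j| ≤ 1 + |gam h τ₁ τ₂ α β x| := by
  have hR := RR_SO2 hA hS hB h x
  fin_cases j
  · simp only [Fin.zero_eta, GG_0]
    linarith [SO2_le hR i 0, abs_nonneg (gam h τ₁ τ₂ α β x)]
  · simp only [Fin.mk_one, GG_1]
    refine (abs_add_le _ _).trans (add_le_add (SO2_le hR i 1) ?_)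
    rw [abs_mul]
    exact mul_le_of_le_one_right (abs_nonneg _) (SO2_le hR i 0)

lemma GG_meas (A S B : Mat2) (h τ₁ τ₂ α β : ℝ) (i j : Fin 2) :
    Measurable (fun x => GG A S B h τ₁ τ₂ α β x i j) := by
  fin_cases j
  · simp only [Fin.zero_eta, GG_0]
    exact RR_meas _ _ _ _ _ _
  · simp only [Fin.mk_one, GG_1]
    exact (RR_meas _ _ _ _ _ _).add ((gam_meas _ _ _ _ _).mul (RR_meas _ _ _ _ _ _))

lemma GG_int {A S B : Mat2} (hA : A ∈ SO2) (hS : S ∈ SO2) (hB : B ∈ SO2) (h H τ₁ τ₂ α β : ℝ)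
    (hh : 0 < h) (hH : h ≤ H) (i j : Fin 2) :
    IntegrableOn (fun x => GG A S B h τ₁ τ₂ α β x i j) Rect volume := by
  refine Integrable.of_bound (GG_meas A S B h τ₁ τ₂ α β i j).aestronglyMeasurable
    (1 + h⁻¹ * KK H τ₁ τ₂ α β) (Eventually.of_forall (fun x => ?_))
  have h1 := GG_le hA hS hB h τ₁ τ₂ α β x i j
  have h2 := gam_le h H τ₁ τ₂ α β hh hH x
  rw [Real.norm_eq_abs]; linarith

lemma GG_l1 {A S B : Mat2} (hA : A ∈ SO2) (hS : S ∈ SO2) (hB : B ∈ SO2) (h H τ₁ τ₂ α β : ℝ)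
    (hh : 0 < h) (hH : h ≤ H) (i j : Fin 2) :
    ∫ x in Rect, |GG A S B h τ₁ τ₂ α β x i j| ≤ 2 + 4 * KK H τ₁ τ₂ α β := by
  have g := (gam_int h H τ₁ τ₂ α β hh hH).abs
  have c : Integrable (fun _ : V2 => (1:ℝ)) (volume.restrict Rect) := integrable_const _
  calc _ ≤ ∫ x in Rect, (1 + |gam h τ₁ τ₂ α β x|) :=
        integral_mono_of_nonneg (Eventually.of_forall (fun x => abs_nonneg _)) (c.add g)
          (Eventually.of_forall (fun x => GG_le hA hS hB h τ₁ τ₂ α β x i j))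
    _ = 2 + ∫ x in Rect, |gam h τ₁ τ₂ α β x| := by
        rw [integral_add c g]
        simp [measureReal_def, volume_Rect]
    _ ≤ _ := by
        have := gam_l1 h H τ₁ τ₂ α β hh hH
        linarith

lemma vv_cont (A S B : Mat2) (ψ : V2) (h τ₁ τ₂ α β : ℝ) : Continuous (vv A S B ψ h τ₁ τ₂ α β) := by
  refine continuous_pi (fun i => ?_)
  obtain ⟨K, hK⟩ := vv_lip A S B ψ h τ₁ τ₂ α β i
  exact hK.continuous

lemma Rect_sub : Rect ⊆ Icc (![0, -1] : V2) (![1, 1] : V2) := by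
  rintro x ⟨h1, h2⟩
  rw [mem_Icc, Pi.le_def, Pi.le_def]
  constructor <;> intro i <;> fin_cases i
  · exact h1.1.le
  · exact h2.1.le
  · exact h1.2.le
  · exact h2.2.le

lemma vv_sob {A S B : Mat2} (hA : A ∈ SO2) (hS : S ∈ SO2) (hB : B ∈ SO2) (ψ : V2) (h τ₁ τ₂ α β : ℝ)
    (hh : 0 < h) (E1 : ∀ i, A i 1 - τ₁ * A i 0 = S i 1 + τ₁ * S i 0)
    (E2 : ∀ i, S i 1 - τ₂ * S i 0 = B i 1 + τ₂ * B i 0) :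
    IsSobolev11On Rect (vv A S B ψ h τ₁ τ₂ α β) (GG A S B h τ₁ τ₂ α β) where
  int_u := ((vv_cont A S B ψ h τ₁ τ₂ α β).continuousOn.integrableOn_compact isCompact_Icc).mono_set Rect_sub
  int_gu := fun i j => GG_int hA hS hB h h τ₁ τ₂ α β hh le_rfl i j
  ibp := by
    intro φ hφ hc hs i j
    obtain ⟨K, hK⟩ := vv_lip A S B ψ h τ₁ τ₂ α β i
    obtain ⟨L, hL⟩ := ContDiff.lipschitzWith_of_hasCompactSupport hc hφ (by simp)
    have key := hK.integral_lineDeriv_mul_eq (μ := volume) hL hc (Pi.single j 1)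
    have hz : ∀ x, x ∉ Rect → φ x = 0 := fun x hx =>
      image_eq_zero_of_notMem_tsupport (fun hh => hx (hs hh))
    have hz' : ∀ x, x ∉ Rect → pd j φ x = 0 := by
      intro x hx
      have : x ∉ tsupport (fderiv ℝ φ) := fun hh => hx (hs (tsupport_fderiv_subset ℝ hh))
      unfold pd
      rw [image_eq_zero_of_notMem_tsupport this]; rfl
    have s1 : ∫ x in Rect, vv A S B ψ h τ₁ τ₂ α β x i * pd j φ x
        = ∫ x, vv A S B ψ h τ₁ τ₂ α β x i * pd j φ x :=
      setIntegral_eq_integral_of_forall_compl_eq_zero (fun x hx => by rw [hz' x hx, mul_zero])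
    have s2 : ∫ x in Rect, φ x * GG A S B h τ₁ τ₂ α β x i j
        = ∫ x, φ x * GG A S B h τ₁ τ₂ α β x i j :=
      setIntegral_eq_integral_of_forall_compl_eq_zero (fun x hx => by rw [hz x hx, zero_mul])
    have s3 : ∫ x, lineDeriv ℝ (fun x => vv A S B ψ h τ₁ τ₂ α β x i) x (Pi.single j 1) * φ x
        = ∫ x, φ x * GG A S B h τ₁ τ₂ α β x i j := by
      apply integral_congr_ae
      filter_upwards [good_ae h hh] with x hx
      by_cases hxR : x ∈ Rect
      · rw [(vv_deriv A S B ψ h τ₁ τ₂ α β x hx (Pi.single j 1) i).lineDeriv,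
          dv_eq A S B h τ₁ τ₂ α β hh x hx hxR.1 E1 E2]
        fin_cases j
        · simp [GG_0]; ring
        · simp [GG_1]; ring
      · rw [hz x hxR, mul_zero, zero_mul]
    have s4 : ∫ x, lineDeriv ℝ φ x (-(Pi.single j 1)) * vv A S B ψ h τ₁ τ₂ α β x i
        = - ∫ x, vv A S B ψ h τ₁ τ₂ α β x i * pd j φ x := by
      rw [← integral_neg]
      congr 1
      funext x
      rw [((hφ.differentiable (by simp)) x).lineDeriv_eq_fderiv, map_neg]
      unfold pd
      ring
    rw [s1, s2, ← s3, key, s4, neg_neg]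

lemma vv_mem {A S B : Mat2} (hA : A ∈ SO2) (hS : S ∈ SO2) (hB : B ∈ SO2) (ψ : V2) (lam ε τ₁ τ₂ α β : ℝ)
    (hlam : lam ∈ Ioo (0:ℝ) 1) (hε : 0 < ε)
    (E1 : ∀ i, A i 1 - τ₁ * A i 0 = S i 1 + τ₁ * S i 0)
    (E2 : ∀ i, S i 1 - τ₂ * S i 0 = B i 1 + τ₂ * B i 0) :
    MemAeps Rect lam ε (vv A S B ψ (lam * ε / 4) τ₁ τ₂ α β) (RR A S B (lam * ε / 4))
      (gam (lam * ε / 4) τ₁ τ₂ α β) := by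
  have hl := hlam.1
  have hh : 0 < lam * ε / 4 := by positivity
  refine ⟨Eventually.of_forall (fun x => RR_SO2 hA hS hB _ x), gam_int _ _ τ₁ τ₂ α β hh le_rfl,
    vv_sob hA hS hB ψ _ τ₁ τ₂ α β hh E1 E2, ?_⟩
  have hm : MeasurableSet (Rect ∩ rigid2 lam ε) := isOpen_Rect.measurableSet.inter
    (measurableSet_le measurable_const (measurable_fract.comp (by fun_prop)))
  rw [ae_restrict_iff' hm]
  filter_upwards [good_ae _ hh] with x hx hxR
  rcases le_or_gt (x 1 / (lam * ε / 4)) 0 with h0 | h0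
  · exact gam_lo _ _ _ _ _ _ h0
  rcases lt_or_gt_of_ne hx.2.2.2.2.1 with h4 | h4
  · exfalso
    have hx1 : 0 < x 1 := by
      by_contra hc
      exact absurd h0 (not_lt.2 (div_nonpos_of_nonpos_of_nonneg (not_lt.1 hc) hh.le))
    have h5 : x 1 / ε < lam := by
      have : x 1 / (lam * ε / 4) < 4 := by linarith
      rw [div_lt_iff₀ hh] at this
      rw [div_lt_iff₀ hε]; linarith
    have h6 : Int.fract (x 1 / ε) = x 1 / ε :=
      Int.fract_eq_self.2 ⟨by positivity, h5.trans hlam.2⟩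
    have h7 : lam ≤ Int.fract (x 1 / ε) := hxR.2
    linarith
  · exact gam_hi _ _ _ _ _ _ (by linarith)

lemma pp_sub (a b : ℝ) : |pp a - pp b| ≤ |a - b| := abs_max_sub_max_le_abs a b 0

lemma pp_diff1 {a b : ℝ} (h : |a - b| ≤ 1) : |pp a - pp b| ≤ 1 := (pp_sub a b).trans h

lemma h_pp {h y k : ℝ} (hh : 0 < h) (hy : y < 1) (hk : 0 ≤ k) : |h * pp (y / h - k)| ≤ 1 := by
  have h0 : 0 ≤ pp (y / h - k) := le_max_right _ _
  rw [abs_of_nonneg (by positivity)]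
  rcases le_total (y / h - k) 0 with h1 | h1
  · rw [pp_neg h1]; simp
  · rw [pp_pos h1]
    have : h * (y / h - k) = y - h * k := by field_simp
    rw [this]; nlinarith

lemma abs_prod_le {a b c : ℝ} (ha : |a| ≤ c) (hb : |b| ≤ 1) : |a * b| ≤ c := by
  rw [abs_mul]
  calc |a| * |b| ≤ c * 1 := mul_le_mul ha hb (abs_nonneg _) ((abs_nonneg _).trans ha)
    _ = c := mul_one c

lemma vv_bdd {A S B : Mat2} (hA : A ∈ SO2) (hS : S ∈ SO2) (hB : B ∈ SO2) (ψ : V2) (H τ₁ τ₂ α β : ℝ) :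
    ∃ C : ℝ, ∀ h, 0 < h → h ≤ H → ∀ x ∈ Rect, ∀ i, |vv A S B ψ h τ₁ τ₂ α β x i| ≤ C := by
  refine ⟨1 + 1 + (|ψ 0| + |ψ 1|) + 2 + 2 + 2 + 2 + (1 + H * |τ₁|) + |α| + (1 + H * |τ₂|) + |β|, ?_⟩
  intro h hh hH x hx i
  obtain ⟨⟨a1, a2⟩, b1, b2⟩ := hx
  have dd : ∀ {P Q : Mat2}, P ∈ SO2 → Q ∈ SO2 → ∀ j, |P i j - Q i j| ≤ 2 := by
    intro P Q hP hQ j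
    have := abs_sub (P i j) (Q i j)
    linarith [SO2_le hP i j, SO2_le hQ i j]
  have ft : ∀ τ : ℝ, ∀ {P : Mat2}, P ∈ SO2 → |(1 - h * τ) * P i 0| ≤ 1 + H * |τ| := by
    intro τ P hP
    refine abs_prod_le ?_ (SO2_le hP i 0)
    have := Hv_fac h H τ 0 hh hH
    rwa [Hv_neg le_rfl, mul_zero, add_zero] at this
  have x0 : |x 0| ≤ 1 := by rw [abs_le]; constructor <;> linarith
  have x1 : |x 1| ≤ 1 := by rw [abs_le]; constructor <;> linarith
  have hψ : |ψ i| ≤ |ψ 0| + |ψ 1| := by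
    fin_cases i
    · simp
    · simp
  unfold vv
  refine (abs_add_le _ _).trans (add_le_add ((abs_add_le _ _).trans (add_le_add
    ((abs_add_le _ _).trans (add_le_add ((abs_add_le _ _).trans (add_le_add
    ((abs_add_le _ _).trans (add_le_add ((abs_add_le _ _).trans (add_le_add
    ((abs_add_le _ _).trans (add_le_add ((abs_add_le _ _).trans (add_le_add
    ((abs_add_le _ _).trans (add_le_add ((abs_add_le _ _).trans (add_le_add ?_ ?_)) hψ
    )) ?_)) ?_)) ?_)) ?_)) ?_)) ?_)) ?_)) ?_)
  · exact abs_prod_le (SO2_le hA i 0) x0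
  · exact abs_prod_le (SO2_le hA i 1) x1
  · refine abs_prod_le (dd hS hA 0) (pp_diff1 ?_)
    ring_nf; exact x0
  · refine abs_prod_le (dd hB hS 0) (pp_diff1 ?_)
    ring_nf; exact x0
  · exact abs_prod_le (dd hS hA 1) (h_pp hh b2 (by norm_num))
  · exact abs_prod_le (dd hB hS 1) (h_pp hh b2 (by norm_num))
  · refine abs_prod_le (ft τ₁ hA) (pp_diff1 ?_)
    ring_nf; norm_num
  · refine abs_prod_le (abs_prod_le le_rfl (SO2_le hS i 0)) (pp_diff1 ?_)
    ring_nf; norm_num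
  · refine abs_prod_le (ft τ₂ hS) (pp_diff1 ?_)
    ring_nf; norm_num
  · refine abs_prod_le (abs_prod_le le_rfl (SO2_le hB i 0)) (pp_diff1 ?_)
    ring_nf; norm_num

lemma vv_lo (A S B : Mat2) (ψ : V2) (h τ₁ τ₂ α β : ℝ) (x : V2) (hx0 : x 0 ∈ Ioo (0:ℝ) 1)
    (ht : x 1 / h ≤ 0) (i : Fin 2) :
    vv A S B ψ h τ₁ τ₂ α β x i = A i 0 * x 0 + A i 1 * x 1 + ψ i := by
  obtain ⟨a1, a2⟩ := hx0
  unfold vv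
  set t := x 1 / h
  rw [pp_neg (t := t) (by linarith), pp_neg (t := t - 1) (by linarith), pp_neg (t := t - 2) (by linarith),
    pp_neg (t := t - 3) (by linarith), pp_neg (t := t - 4) (by linarith),
    pp_neg (t := x 0 - 1 + t) (by linarith), pp_neg (t := x 0 - 3 + t) (by linarith)]
  ring

lemma vv_hi (A S B : Mat2) (ψ : V2) (h τ₁ τ₂ α β : ℝ) (hh : 0 < h) (x : V2) (hx0 : x 0 ∈ Ioo (0:ℝ) 1)
    (ht : 4 < x 1 / h) (i : Fin 2) :
    vv A S B ψ h τ₁ τ₂ α β x i = B i 0 * x 0 + B i 1 * x 1 + ψ i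
      + (A i 0 + α * S i 0 + S i 0 + β * B i 0)
      - h * ((S i 1 - A i 1) + 3 * (B i 1 - S i 1) + τ₁ * A i 0 + τ₂ * S i 0) := by
  obtain ⟨a1, a2⟩ := hx0
  unfold vv
  have hd : x 1 = h * (x 1 / h) := by field_simp
  set t := x 1 / h
  rw [pp_pos (t := t) (by linarith), pp_pos (t := t - 1) (by linarith), pp_pos (t := t - 2) (by linarith),
    pp_pos (t := t - 3) (by linarith), pp_pos (t := t - 4) (by linarith),
    pp_pos (t := x 0 - 1 + t) (by linarith), pp_pos (t := x 0 - 3 + t) (by linarith), hd]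
  ring

lemma vv_shift (A S B : Mat2) (ψ b : V2) (h τ₁ τ₂ α β : ℝ) (x : V2) (i : Fin 2) :
    vv A S B (ψ + b) h τ₁ τ₂ α β x i = vv A S B ψ h τ₁ τ₂ α β x i + b i := by
  simp only [vv, Pi.add_apply]
  ring

lemma vv_lim {A S B : Mat2} (ψp ψm : V2) (τ₁ τ₂ α β : ℝ) (h : ℕ → ℝ) (hpos : ∀ n, 0 < h n)
    (h0 : Tendsto h atTop (𝓝 0))
    (E3 : ∀ i, A i 0 + α * S i 0 + S i 0 + β * B i 0 = (ψp - ψm) i)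
    (x : V2) (hx : x ∈ Rect) (hx1 : x 1 ≠ 0) (i : Fin 2) :
    Tendsto (fun n => vv A S B ψm (h n) τ₁ τ₂ α β x i) atTop
      (𝓝 ((((if 0 ≤ x 1 then B else A).mulVec x) + (if 0 ≤ x 1 then ψp else ψm)) i)) := by
  rcases lt_or_gt_of_ne hx1 with hn | hp
  · rw [if_neg (by linarith), if_neg (by linarith)]
    refine tendsto_const_nhds.congr (fun n => ?_)
    rw [vv_lo A S B ψm (h n) τ₁ τ₂ α β x hx.1 (div_nonpos_of_nonpos_of_nonneg hn.le (hpos n).le)]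
    fin_cases i <;> simp [Matrix.mulVec, dotProduct, Fin.sum_univ_two]
  · rw [if_pos hp.le, if_pos hp.le]
    have ev : ∀ᶠ n in atTop, h n < x 1 / 4 := h0.eventually_lt_const (by positivity)
    have lim := (h0.mul_const ((S i 1 - A i 1) + 3 * (B i 1 - S i 1) + τ₁ * A i 0 + τ₂ * S i 0)).const_sub
      (B i 0 * x 0 + B i 1 * x 1 + ψm i + (A i 0 + α * S i 0 + S i 0 + β * B i 0))
    have e : (B.mulVec x + ψp) i = B i 0 * x 0 + B i 1 * x 1 + ψm i
        + (A i 0 + α * S i 0 + S i 0 + β * B i 0) - 0 *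
        ((S i 1 - A i 1) + 3 * (B i 1 - S i 1) + τ₁ * A i 0 + τ₂ * S i 0) := by
      rw [E3]
      fin_cases i <;> simp [Matrix.mulVec, dotProduct, Fin.sum_univ_two]
    rw [e]
    refine lim.congr' ?_
    filter_upwards [ev] with n hn
    rw [vv_hi A S B ψm (h n) τ₁ τ₂ α β (hpos n) x hx.1 (by
      rw [lt_div_iff₀ (hpos n)]; linarith)]

/-- Lemma 4.3: approximation of maps in `A ∩ SBV_∞` with a single jump.
Let `Ω = (0,1) × (−1,1)` and `u(x) = R(x₂)x + ψ(x₂)` with `R ≡ R⁺`, `ψ ≡ ψ⁺` for `x₂ ∈ [0,1)`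
and `R ≡ R⁻`, `ψ ≡ ψ⁻` for `x₂ ∈ (−1,0)`, where `R^± ∈ SO(2)`, `ψ^± ∈ ℝ²`. Then there is a
sequence `u_ε ∈ A_ε` with `∫_Ω u_ε = ∫_Ω u` and `u_ε ⇀* u` in `BV(Ω;ℝ²)`. -/
theorem single_jump_approx
    (lam : ℝ) (hlam : lam ∈ Ioo (0:ℝ) 1)
    (ε : ℕ → ℝ) (hεpos : ∀ n, 0 < ε n) (hε0 : Tendsto ε atTop (𝓝 0))
    (Rp Rm : Mat2) (hRp : Rp ∈ SO2) (hRm : Rm ∈ SO2) (ψp ψm : V2)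
    (u : V2 → V2)
    (hform : ∀ᵐ x ∂(volume.restrict Rect),
      u x = ((if 0 ≤ x 1 then Rp else Rm).mulVec x) + (if 0 ≤ x 1 then ψp else ψm)) :
    ∃ un : ℕ → V2 → V2, ∃ Rn : ℕ → V2 → Mat2, ∃ γn : ℕ → V2 → ℝ,
      (∀ n, MemAeps Rect lam (ε n) (un n) (Rn n) (γn n)) ∧
      (∀ n, (∫ x in Rect, un n x) = ∫ x in Rect, u x) ∧
      WeakStarToBV Rect un u := by
  obtain ⟨S, hS, τ₁, τ₂, α, β, E1, E2, E3⟩ := exists_params Rm Rp hRm hRp (ψp - ψm)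
  have hl := hlam.1
  have hBV := bv_u Rp Rm ψp ψm u hform
  let h : ℕ → ℝ := fun n => lam * ε n / 4
  have hpos : ∀ n, 0 < h n := fun n => by
    have := hεpos n
    simp only [h]; positivity
  have h0 : Tendsto h atTop (𝓝 0) := by
    simpa using (hε0.const_mul lam).div_const 4
  obtain ⟨H, hH⟩ := h0.bddAbove_range
  have hH : ∀ n, h n ≤ H := fun n => hH ⟨n, rfl⟩
  obtain ⟨C, hC⟩ := vv_bdd hRm hS hRp ψm H τ₁ τ₂ α β
  have hvint : ∀ n i, Integrable (fun x => vv Rm S Rp ψm (h n) τ₁ τ₂ α β x i) (volume.restrict Rect) :=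
    fun n i => (vv_sob hRm hS hRp ψm (h n) τ₁ τ₂ α β (hpos n) E1 E2).int_u.eval i
  have hui : ∀ i, Integrable (fun x => u x i) (volume.restrict Rect) := fun i => hBV.int_u.eval i
  have hCae : ∀ n i, ∀ᵐ x ∂(volume.restrict Rect), |vv Rm S Rp ψm (h n) τ₁ τ₂ α β x i| ≤ C := by
    intro n i
    filter_upwards [ae_restrict_mem isOpen_Rect.measurableSet] with x hx
    exact hC (h n) (hpos n) (hH n) x hx i
  have hlim : ∀ i, ∀ᵐ x ∂(volume.restrict Rect),
      Tendsto (fun n => vv Rm S Rp ψm (h n) τ₁ τ₂ α β x i) atTop (𝓝 (u x i)) := by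
    intro i
    filter_upwards [hform, ae_restrict_mem isOpen_Rect.measurableSet,
      ae_restrict_of_ae (good_ae 1 one_pos)] with x hx hxR hg
    rw [hx]
    exact vv_lim ψp ψm τ₁ τ₂ α β h hpos h0 E3 x hxR (by simpa using hg.1) i
  let b : ℕ → V2 := fun n i =>
    (1 / 2) * ((∫ x in Rect, u x i) - ∫ x in Rect, vv Rm S Rp ψm (h n) τ₁ τ₂ α β x i)
  have hb : ∀ i, Tendsto (fun n => b n i) atTop (𝓝 0) := by
    intro i
    have := tendsto_integral_of_dominated_convergence (μ := volume.restrict Rect)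
      (F := fun n x => vv Rm S Rp ψm (h n) τ₁ τ₂ α β x i) (f := fun x => u x i) (fun _ => C)
      (fun n => (hvint n i).aestronglyMeasurable) (integrable_const _) (fun n => hCae n i) (hlim i)
    have := (this.const_sub (∫ x in Rect, u x i)).const_mul (1 / 2)
    rwa [sub_self, mul_zero] at this
  have hbb : ∃ D : ℝ, ∀ n i, |b n i| ≤ D := by
    obtain ⟨D0, hD0⟩ := (hb 0).abs.bddAbove_range
    obtain ⟨D1, hD1⟩ := (hb 1).abs.bddAbove_range
    refine ⟨max D0 D1, fun n i => ?_⟩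
    fin_cases i
    · exact (hD0 ⟨n, rfl⟩).trans (le_max_left _ _)
    · exact (hD1 ⟨n, rfl⟩).trans (le_max_right _ _)
  obtain ⟨D, hD⟩ := hbb
  refine ⟨fun n => vv Rm S Rp (ψm + b n) (h n) τ₁ τ₂ α β, fun n => RR Rm S Rp (h n),
    fun n => gam (h n) τ₁ τ₂ α β, ?_, ?_, ?_⟩
  · intro n
    exact vv_mem hRm hS hRp _ lam (ε n) τ₁ τ₂ α β hlam (hεpos n) E1 E2
  · intro n
    have hs := vv_sob hRm hS hRp (ψm + b n) (h n) τ₁ τ₂ α β (hpos n) E1 E2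
    funext i
    rw [eval_integral (fun i => hs.int_u.eval i), eval_integral hui]
    simp only [vv_shift]
    rw [integral_add (hvint n i) (integrable_const _)]
    simp [measureReal_def, volume_Rect, b]
  · refine weakStar_of hBV (fun n => vv_sob hRm hS hRp (ψm + b n) (h n) τ₁ τ₂ α β (hpos n) E1 E2)
      (2 + 4 * KK H τ₁ τ₂ α β) (fun n i j => GG_l1 hRm hS hRp (h n) H τ₁ τ₂ α β (hpos n) (hH n) i j)
      (C + D) ?_ ?_
    · intro n i
      filter_upwards [hCae n i] with x hx
      rw [vv_shift]
      exact (abs_add_le _ _).trans (add_le_add hx (hD n i))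
    · intro i
      filter_upwards [hlim i] with x hx
      simp only [vv_shift]
      simpa using hx.add (hb i)
end
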